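/- arXiv:1601.02566 — 3 statements merged into one kernel-verified Lean document; each statement's English description precedes it below -/
import Mathlib

section
/- Let c, x, y, σ ∈ ℂ with Re c > 0, Re x > 0, Re y > 0, and |Re σ| < (Re c)/2 (so that all confluent hypergeometric functions below are in the domain of their Laplace-transform representation; note that Re x > 0 and Re y > 0 automatically imply Magnus' convergence conditions Re((1−i)√x + (1+i)√y) > 0 and Re((1+i)√x + (1−i)√y) > 0). Then Γ(c) U(c, 2c, x+y) = (1/(2πi)) ∫_{σ−i∞}^{σ+i∞} Γ(c/2 − s) Γ(c/2 + s) U(c/2 − s, c, x) U(c/2 + s, c, y) ds. Equivalently, in purely integral form: ∫₀^∞ e^{−(x+y)t} t^{c−1} (1+t)^{c−1} dt = (1/(2π)) ∫_ℝ (∫₀^∞ e^{−xt} t^{c/2−σ−iτ−1} (1+t)^{c/2+σ+iτ−1} dt) (∫₀^∞ e^{−yt} t^{c/2+σ+iτ−1} (1+t)^{c/2−σ−iτ−1} dt) dτ. -/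
/-- Confluent hypergeometric function of the second kind via its Laplace-transform
representation, valid for `Re a > 0`, `Re z > 0` (principal branch powers). -/
noncomputable def hypU (a b z : ℂ) : ℂ :=
  (Complex.Gamma a)⁻¹ *
    ∫ t in Set.Ioi (0 : ℝ), Complex.exp (-z * t) * (t : ℂ) ^ (a - 1) * ((1 : ℂ) + t) ^ (b - a - 1)

/-!
The substitution `w = t / (1 + t)` turns `Γ(a) U(a, b, z)` into the Mellin transform at `a` of
`φ_{b,z}(w) = (1 - w)^(-b) exp(-z w / (1 - w))` on `(0, 1)`. Since
`φ_{b₁,x} φ_{b₂,y} = φ_{b₁+b₂,x+y}`, the contour integral is the formula expressing the Mellin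
transform of a product as a convolution of Mellin transforms along a vertical line, which is
Mellin inversion followed by Fubini. The integrability that inversion needs comes from integrating
by parts twice, because the derivative `b φ_{b+1,z} - z φ_{b+2,z}` of `φ_{b,z}` is again of the
same form.
-/

open Complex MeasureTheory Set Filter Topology

section LogarithmicCoordinate

variable {E : Type*} [NormedAddCommGroup E] [NormedSpace ℝ E]

theorem integrableOn_Ioi_zero_iff_integrable_comp_exp {f : ℝ → E} :
    IntegrableOn f (Ioi 0) ↔ Integrable fun u => Real.exp u • f (Real.exp u) := by
  rw [← Real.range_exp, ← image_univ, integrableOn_image_iff_integrableOn_abs_deriv_smul .univ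
    (fun u _ => (Real.hasDerivAt_exp u).hasDerivWithinAt) Real.exp_injective.injOn]
  simp

theorem integral_Ioi_zero_eq_integral_comp_exp (f : ℝ → E) :
    ∫ t in Ioi 0, f t = ∫ u, Real.exp u • f (Real.exp u) := by
  rw [← Real.range_exp, ← image_univ, integral_image_eq_integral_abs_deriv_smul .univ
    (fun u _ => (Real.hasDerivAt_exp u).hasDerivWithinAt) Real.exp_injective.injOn]
  simp

theorem integral_Ioi_zero_eq_zero_of_hasDerivAt {f f' : ℝ → E}
    (hderiv : ∀ t ∈ Ioi 0, HasDerivAt f (f' t) t) (hf' : IntegrableOn f' (Ioi 0))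
    (hf : IntegrableOn (fun t => t⁻¹ • f t) (Ioi 0)) : ∫ t in Ioi 0, f' t = 0 := by
  rw [integral_Ioi_zero_eq_integral_comp_exp]
  refine integral_eq_zero_of_hasDerivAt_of_integrable (f := fun u => f (Real.exp u))
    (fun u => (hderiv _ (Real.exp_pos u)).scomp u (Real.hasDerivAt_exp u))
    (integrableOn_Ioi_zero_iff_integrable_comp_exp.1 hf') ?_
  simpa [smul_smul, ← Real.exp_neg, ← Real.exp_add] using
    integrableOn_Ioi_zero_iff_integrable_comp_exp.1 hf

end LogarithmicCoordinate

section Mellin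

variable {E : Type*} [NormedAddCommGroup E] [NormedSpace ℂ E]

theorem integral_vertical_line_eq_re (F : ℂ → E) (z : ℂ) :
    ∫ τ : ℝ, F (z + τ * I) = ∫ τ : ℝ, F (z.re + τ * I) := by
  rw [← integral_add_right_eq_self (μ := volume) (fun τ : ℝ => F (z.re + τ * I)) z.im]
  congr! 3 with τ
  nth_rw 1 [← re_add_im z]
  push_cast
  ring

theorem mellin_deriv {f f' : ℝ → E} {s : ℂ} (hderiv : ∀ t ∈ Ioi 0, HasDerivAt f (f' t) t)
    (hf : MellinConvergent f s) (hf' : MellinConvergent f' (s + 1)) :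
    mellin f' (s + 1) = -s • mellin f s := by
  have hpow : ∀ t ∈ Ioi (0 : ℝ), HasDerivAt (fun t : ℝ => (t : ℂ) ^ s • f t)
      (s • (t : ℂ) ^ (s - 1) • f t + (t : ℂ) ^ (s + 1 - 1) • f' t) t := fun t ht => by
    have := ((hasDerivAt_id (t : ℂ)).cpow_const (c := s)
      (ofReal_mem_slitPlane.2 ht)).comp_ofReal.fun_smul (hderiv t ht)
    simpa [mul_smul, add_comm] using this
  have hzero : ∫ t in Ioi (0 : ℝ),
      s • (t : ℂ) ^ (s - 1) • f t + (t : ℂ) ^ (s + 1 - 1) • f' t = 0 := by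
    refine integral_Ioi_zero_eq_zero_of_hasDerivAt hpow ((hf.smul s).add hf')
      (hf.congr_fun (fun t ht => ?_) measurableSet_Ioi)
    change (t : ℂ) ^ (s - 1) • f t = t⁻¹ • (t : ℂ) ^ s • f t
    rw [cpow_sub _ _ (ofReal_ne_zero.2 (ne_of_gt ht)), cpow_one, div_eq_inv_mul, mul_smul,
      ← ofReal_inv, coe_smul]
  rw [integral_add (hf.fun_smul s) hf', integral_smul] at hzero
  rw [neg_smul]
  exact eq_neg_of_add_eq_zero_right hzero

theorem norm_cpow_smul_of_re_eq {s s' : ℂ} (h : s.re = s'.re) {t : ℝ} (ht : t ∈ Ioi 0) (v : E) :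
    ‖(t : ℂ) ^ s • v‖ = ‖(t : ℂ) ^ s' • v‖ := by
  rw [norm_smul, norm_smul, norm_cpow_eq_rpow_re_of_pos ht, norm_cpow_eq_rpow_re_of_pos ht, h]

theorem mellinConvergent_of_re_eq {f : ℝ → E} {s s' : ℂ} (h : s.re = s'.re)
    (hf : MellinConvergent f s) : MellinConvergent f s' := by
  have hmeas : AEStronglyMeasurable (fun t : ℝ => (t : ℂ) ^ (s' - s)) (volume.restrict (Ioi 0)) :=
    (by fun_prop : Measurable fun t : ℝ => (t : ℂ) ^ (s' - s)).aestronglyMeasurable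
  have hbound : ∀ᵐ t : ℝ ∂volume.restrict (Ioi 0), ‖(t : ℂ) ^ (s' - s)‖ ≤ 1 :=
    (ae_restrict_mem measurableSet_Ioi).mono fun t ht => by
      simp [norm_cpow_eq_rpow_re_of_pos ht, h]
  refine IntegrableOn.congr_fun (hf.bdd_smul 1 hmeas hbound) (fun t ht => ?_) measurableSet_Ioi
  change (t : ℂ) ^ (s' - s) • (t : ℂ) ^ (s - 1) • f t = (t : ℂ) ^ (s' - 1) • f t
  rw [smul_smul, ← cpow_add _ _ (ofReal_ne_zero.2 (ne_of_gt ht)), sub_add_sub_cancel]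

theorem norm_mellin_le_of_re_eq (f : ℝ → E) {s s' : ℂ} (h : s.re = s'.re) :
    ‖mellin f s‖ ≤ ∫ t in Ioi (0 : ℝ), ‖(t : ℂ) ^ (s' - 1) • f t‖ :=
  (norm_integral_le_integral_norm _).trans_eq <| setIntegral_congr_fun measurableSet_Ioi
    fun _ ht => norm_cpow_smul_of_re_eq (by simp [h]) ht _

theorem continuous_mellin_vertical {f : ℝ → E} {σ : ℝ} (hf : MellinConvergent f σ) :
    Continuous fun τ : ℝ => mellin f (σ + τ * I) := by
  refine continuous_of_dominated
    (fun τ => (mellinConvergent_of_re_eq (s' := σ + τ * I) (by simp) hf).aestronglyMeasurable)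
    (fun τ => (ae_restrict_mem measurableSet_Ioi).mono fun t ht =>
      (norm_cpow_smul_of_re_eq (s' := σ - 1) (by simp) ht _).le) hf.norm
    ((ae_restrict_mem measurableSet_Ioi).mono fun t ht => ?_)
  exact (Continuous.const_cpow (by fun_prop)
    (.inl (ofReal_ne_zero.2 (ne_of_gt ht)))).smul continuous_const

theorem verticalIntegrable_mellin_of_hasDerivAt {f f' f'' : ℝ → E} {σ : ℝ}
    (hderiv : ∀ t ∈ Ioi 0, HasDerivAt f (f' t) t) (hderiv' : ∀ t ∈ Ioi 0, HasDerivAt f' (f'' t) t)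
    (hf : MellinConvergent f σ) (hf' : MellinConvergent f' (σ + 1))
    (hf'' : MellinConvergent f'' (σ + 1 + 1)) : VerticalIntegrable (mellin f) σ := by
  set C := ∫ t in Ioi (0 : ℝ), ‖(t : ℂ) ^ ((σ : ℂ) - 1) • f t‖
  set C'' := ∫ t in Ioi (0 : ℝ), ‖(t : ℂ) ^ ((σ + 1 + 1 : ℂ) - 1) • f'' t‖
  refine (integrable_inv_one_add_sq.const_mul (C + C'')).mono'
    (continuous_mellin_vertical hf).aestronglyMeasurable (.of_forall fun τ => ?_)
  set s : ℂ := σ + τ * I with hs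
  have hconv : MellinConvergent f s := mellinConvergent_of_re_eq (by simp [hs]) hf
  have hconv' : MellinConvergent f' (s + 1) := mellinConvergent_of_re_eq (by simp [hs]) hf'
  have hconv'' : MellinConvergent f'' (s + 1 + 1) :=
    mellinConvergent_of_re_eq (by simp [hs]) hf''
  have hmellin : mellin f'' (s + 1 + 1) = (s + 1) • s • mellin f s := by
    rw [mellin_deriv hderiv' hconv' hconv'', mellin_deriv hderiv hconv hconv', neg_smul,
      neg_smul, smul_neg, neg_neg]
  have hquad : τ ^ 2 * ‖mellin f s‖ ≤ C'' := calc
    τ ^ 2 * ‖mellin f s‖ = |(s + 1).im| * |s.im| * ‖mellin f s‖ := by simp [hs, ← sq]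
    _ ≤ ‖s + 1‖ * ‖s‖ * ‖mellin f s‖ := by gcongr <;> exact abs_im_le_norm _
    _ = ‖mellin f'' (s + 1 + 1)‖ := by rw [hmellin, norm_smul, norm_smul, mul_assoc]
    _ ≤ C'' := norm_mellin_le_of_re_eq f'' (by simp [hs])
  have hconst : ‖mellin f s‖ ≤ C := norm_mellin_le_of_re_eq f (by simp [hs])
  rw [← div_eq_mul_inv, le_div_iff₀ (by positivity)]
  linarith

theorem integrable_cpow_smul_smul_vertical {f : ℝ → ℂ} {G : ℂ → E} {s : ℂ} {σ : ℝ}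
    (hf : MellinConvergent f (s - σ)) (hG : VerticalIntegrable G σ) :
    Integrable (fun p : ℝ × ℝ =>
      ((p.1 : ℂ) ^ (s - (σ + p.2 * I) - 1) • f p.1) • G (σ + p.2 * I))
      ((volume.restrict (Ioi 0)).prod volume) := by
  have hpos : ∀ᵐ p : ℝ × ℝ ∂(volume.restrict (Ioi 0)).prod volume, p.1 ∈ Ioi 0 :=
    Measure.quasiMeasurePreserving_fst.ae (ae_restrict_mem measurableSet_Ioi)
  have hmeas : AEStronglyMeasurable (fun p : ℝ × ℝ => (p.1 : ℂ) ^ (-(p.2 * I)))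
      ((volume.restrict (Ioi 0)).prod volume) :=
    (by fun_prop : Measurable fun p : ℝ × ℝ => (p.1 : ℂ) ^ (-(p.2 * I))).aestronglyMeasurable
  refine ((hf.smul_prod hG).bdd_smul 1 hmeas (hpos.mono fun p hp => ?_)).congr
    (hpos.mono fun p hp => ?_)
  · simp [norm_cpow_eq_rpow_re_of_pos hp]
  · have hcpow : (p.1 : ℂ) ^ (-(p.2 * I)) * (p.1 : ℂ) ^ (s - σ - 1) =
        (p.1 : ℂ) ^ (s - (σ + p.2 * I) - 1) := by
      rw [← cpow_add _ _ (ofReal_ne_zero.2 (ne_of_gt hp))]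
      ring_nf
    simp only [Pi.smul_apply', smul_eq_mul, smul_smul, ← mul_assoc, hcpow]

theorem mellin_smul [CompleteSpace E] {f : ℝ → ℂ} {g : ℝ → E} {s z : ℂ}
    (hf : MellinConvergent f (s - z)) (hg : MellinConvergent g z)
    (hgz : VerticalIntegrable (mellin g) z.re) (hgc : ContinuousOn g (Ioi 0)) :
    mellin (fun t => f t • g t) s =
      (1 / (2 * Real.pi) : ℝ) • ∫ τ : ℝ, mellin f (s - (z + τ * I)) • mellin g (z + τ * I) := by
  rw [integral_vertical_line_eq_re fun z => mellin f (s - z) • mellin g z]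
  have hinv : ∀ t ∈ Ioi (0 : ℝ), (t : ℂ) ^ (s - 1) • f t • g t = (1 / (2 * Real.pi) : ℝ) •
      ∫ τ : ℝ, ((t : ℂ) ^ (s - (z.re + τ * I) - 1) • f t) • mellin g (z.re + τ * I) := by
    intro t ht
    nth_rw 1 [← mellinInv_mellin_eq z.re g ht (mellinConvergent_of_re_eq (by simp) hg) hgz
      (hgc.continuousAt (Ioi_mem_nhds ht))]
    rw [mellinInv, smul_comm (f t), smul_comm ((t : ℂ) ^ (s - 1)), smul_smul, ← integral_smul]
    congr! 3 with τ
    rw [smul_smul, smul_eq_mul, mul_right_comm, ← cpow_add _ _ (ofReal_ne_zero.2 (ne_of_gt ht))]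
    ring_nf
  calc mellin (fun t => f t • g t) s
      = ∫ t in Ioi (0 : ℝ), (1 / (2 * Real.pi) : ℝ) •
        ∫ τ : ℝ, ((t : ℂ) ^ (s - (z.re + τ * I) - 1) • f t) • mellin g (z.re + τ * I) :=
        setIntegral_congr_fun measurableSet_Ioi hinv
    _ = (1 / (2 * Real.pi) : ℝ) • ∫ τ : ℝ, ∫ t in Ioi (0 : ℝ),
        ((t : ℂ) ^ (s - (z.re + τ * I) - 1) • f t) • mellin g (z.re + τ * I) := by
        rw [integral_smul, integral_integral_swap (integrable_cpow_smul_smul_vertical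
          (mellinConvergent_of_re_eq (by simp) hf) hgz)]
    _ = _ := by simp_rw [integral_smul_const, mellin]

end Mellin

/-- The function on `ℝ` whose Mellin transform at `a` is `Γ(a) U(a, b, z)`: the Laplace integrand
of `hypU` in the variable `w = t / (1 + t)`. It is cut off to `w < 1`, not to the image `(0, 1)`
of the substitution, so that it is smooth on all of `ℝ` when `Re z > 0`. -/
noncomputable def hypUMellinKernel (b z : ℂ) : ℝ → ℂ :=
  (Iio 1).indicator fun w => ((1 - w : ℝ) : ℂ) ^ (-b) * exp (-z * (w / (1 - w) : ℝ))

section Kernel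

theorem hypUMellinKernel_of_lt_one (b z : ℂ) {w : ℝ} (hw : w < 1) :
    hypUMellinKernel b z w = ((1 - w : ℝ) : ℂ) ^ (-b) * exp (-z * (w / (1 - w) : ℝ)) :=
  indicator_of_mem (mem_Iio.2 hw) _

theorem hypUMellinKernel_of_one_le (b z : ℂ) {w : ℝ} (hw : 1 ≤ w) : hypUMellinKernel b z w = 0 :=
  indicator_of_notMem (notMem_Iio.2 hw) _

theorem hypUMellinKernel_mul (b b' z z' : ℂ) (w : ℝ) :
    hypUMellinKernel b z w * hypUMellinKernel b' z' w = hypUMellinKernel (b + b') (z + z') w := by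
  obtain hw | hw := lt_or_ge w 1
  · have hne : ((1 - w : ℝ) : ℂ) ≠ 0 := ofReal_ne_zero.2 (sub_pos.2 hw).ne'
    simp only [hypUMellinKernel_of_lt_one _ _ hw, neg_add, cpow_add _ _ hne, add_mul, exp_add]
    ring
  · simp [hypUMellinKernel_of_one_le _ _ hw]

theorem norm_hypUMellinKernel_of_lt_one (b z : ℂ) {w : ℝ} (hw : w < 1) :
    ‖hypUMellinKernel b z w‖ =
      Real.exp z.re * ((1 - w)⁻¹ ^ b.re * Real.exp (-z.re * (1 - w)⁻¹)) := by
  have hpos : 0 < 1 - w := sub_pos.2 hw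
  have hexp : -z.re * (w / (1 - w)) = z.re + -z.re * (1 - w)⁻¹ := by
    field_simp
    ring
  rw [hypUMellinKernel_of_lt_one _ _ hw, norm_mul, norm_cpow_eq_rpow_re_of_pos hpos, norm_exp,
    re_mul_ofReal, neg_re, neg_re, hexp, Real.exp_add, Real.inv_rpow hpos.le, Real.rpow_neg hpos.le]
  ring

theorem tendsto_hypUMellinKernel_one_left (b : ℂ) {z : ℂ} (hz : 0 < z.re) :
    Tendsto (hypUMellinKernel b z) (𝓝[<] 1) (𝓝 0) := by
  have hinv : Tendsto (fun w : ℝ => (1 - w)⁻¹) (𝓝[<] 1) atTop := by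
    refine tendsto_inv_nhdsGT_zero.comp (tendsto_nhdsWithin_iff.2 ⟨?_, ?_⟩)
    · exact ((continuous_const.sub continuous_id).tendsto' _ _ (sub_self 1)).mono_left inf_le_left
    · exact eventually_mem_nhdsWithin.mono fun w (hw : w < 1) => mem_Ioi.2 (sub_pos.2 hw)
  refine tendsto_zero_iff_norm_tendsto_zero.2 ?_
  rw [← mul_zero (Real.exp z.re)]
  exact (((tendsto_rpow_mul_exp_neg_mul_atTop_nhds_zero b.re z.re hz).comp hinv).const_mul _).congr'
    (eventually_mem_nhdsWithin.mono fun w hw => (norm_hypUMellinKernel_of_lt_one b z hw).symm)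

theorem continuousAt_hypUMellinKernel_one (b : ℂ) {z : ℂ} (hz : 0 < z.re) :
    ContinuousAt (hypUMellinKernel b z) 1 := by
  rw [ContinuousAt, hypUMellinKernel_of_one_le _ _ le_rfl, ← nhdsLT_sup_nhdsGE]
  refine (tendsto_hypUMellinKernel_one_left b hz).sup (tendsto_const_nhds.congr' ?_)
  exact eventually_mem_nhdsWithin.mono fun w hw => (hypUMellinKernel_of_one_le b z hw).symm

theorem hasDerivAt_hypUMellinKernel_of_lt_one (b z : ℂ) {w : ℝ} (hw : w < 1) :
    HasDerivAt (hypUMellinKernel b z)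
      (b * hypUMellinKernel (b + 1) z w - z * hypUMellinKernel (b + 2) z w) w := by
  have hpos : 0 < 1 - w := sub_pos.2 hw
  have hne : ((1 - w : ℝ) : ℂ) ≠ 0 := ofReal_ne_zero.2 hpos.ne'
  have hsub : HasDerivAt (fun w : ℝ => 1 - w) (-1) w := (hasDerivAt_id w).const_sub 1
  have hpow : HasDerivAt (fun w : ℝ => ((1 - w : ℝ) : ℂ) ^ (-b))
      (b * ((1 - w : ℝ) : ℂ) ^ (-b - 1)) w := by
    have := ((hasDerivAt_id ((1 - w : ℝ) : ℂ)).cpow_const (c := -b)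
      (ofReal_mem_slitPlane.2 hpos)).comp_ofReal.scomp w hsub
    simpa [Function.comp_def] using this
  have hexp : HasDerivAt (fun w : ℝ => exp (-z * (w / (1 - w) : ℝ)))
      (exp (-z * (w / (1 - w) : ℝ)) * (-z * ((1 / (1 - w) ^ 2 : ℝ) : ℂ))) w := by
    convert! (((hasDerivAt_id w).div hsub hpos.ne').ofReal_comp.const_mul (-z)).cexp using 5
    simp
  refine ((hpow.mul hexp).congr_deriv ?_).congr_of_eventuallyEq
    ((eventually_lt_nhds hw).mono fun w => hypUMellinKernel_of_lt_one b z)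
  rw [hypUMellinKernel_of_lt_one _ _ hw, hypUMellinKernel_of_lt_one _ _ hw, neg_add, neg_add,
    cpow_add _ _ hne, cpow_add _ _ hne, cpow_sub _ _ hne, cpow_neg _ 2, cpow_neg_one, cpow_one,
    cpow_ofNat]
  push_cast
  ring

theorem hasDerivAt_hypUMellinKernel_of_ne_one (b z : ℂ) {w : ℝ} (hw : w ≠ 1) :
    HasDerivAt (hypUMellinKernel b z)
      (b * hypUMellinKernel (b + 1) z w - z * hypUMellinKernel (b + 2) z w) w := by
  obtain hw | hw := hw.lt_or_gt
  · exact hasDerivAt_hypUMellinKernel_of_lt_one b z hw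
  · simp only [hypUMellinKernel_of_one_le _ _ hw.le, mul_zero, sub_zero]
    exact (hasDerivAt_const w 0).congr_of_eventuallyEq
      ((eventually_gt_nhds hw).mono fun w hw => hypUMellinKernel_of_one_le b z hw.le)

variable {z : ℂ}

theorem hasDerivAt_hypUMellinKernel (b : ℂ) (hz : 0 < z.re) (w : ℝ) :
    HasDerivAt (hypUMellinKernel b z)
      (b * hypUMellinKernel (b + 1) z w - z * hypUMellinKernel (b + 2) z w) w :=
  hasDerivAt_of_hasDerivAt_of_ne' (fun _ => hasDerivAt_hypUMellinKernel_of_ne_one b z)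
    (continuousAt_hypUMellinKernel_one b hz)
    (((continuousAt_hypUMellinKernel_one (b + 1) hz).const_mul b).sub
      ((continuousAt_hypUMellinKernel_one (b + 2) hz).const_mul z)) w

theorem continuous_hypUMellinKernel (b : ℂ) (hz : 0 < z.re) : Continuous (hypUMellinKernel b z) :=
  continuous_iff_continuousAt.2 fun w => (hasDerivAt_hypUMellinKernel b hz w).continuousAt

theorem mellinConvergent_hypUMellinKernel (b : ℂ) (hz : 0 < z.re) {s : ℂ} (hs : 0 < s.re) :
    MellinConvergent (hypUMellinKernel b z) s := by
  have hcont := continuous_hypUMellinKernel b hz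
  refine mellinConvergent_of_isBigO_rpow (a := s.re + 1) (b := 0)
    (hcont.locallyIntegrable.locallyIntegrableOn _) ?_ (by linarith) ?_ hs
  · refine EventuallyEq.trans_isBigO ?_ (Asymptotics.isBigO_zero _ _)
    exact (eventually_ge_atTop 1).mono fun w => hypUMellinKernel_of_one_le b z
  · simp only [neg_zero, Real.rpow_zero]
    exact ((hcont.tendsto 0).isBigO_one ℝ).mono inf_le_left

theorem verticalIntegrable_mellin_hypUMellinKernel (b : ℂ) (hz : 0 < z.re) {σ : ℝ} (hσ : 0 < σ) :
    VerticalIntegrable (mellin (hypUMellinKernel b z)) σ := by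
  have hderiv := fun b w => hasDerivAt_hypUMellinKernel b hz w
  have hconv : ∀ b s, 0 < s.re → MellinConvergent (hypUMellinKernel b z) s :=
    fun b _ => mellinConvergent_hypUMellinKernel b hz
  have hconv_deriv : ∀ b s, 0 < s.re → MellinConvergent (fun w =>
      b * hypUMellinKernel (b + 1) z w - z * hypUMellinKernel (b + 2) z w) s := fun b s hs =>
    (hasMellin_sub ((hconv _ s hs).const_smul b) ((hconv _ s hs).const_smul z)).1
  refine verticalIntegrable_mellin_of_hasDerivAt (fun w _ => hderiv b w)
    (fun w _ => ((hderiv (b + 1) w).const_mul b).sub ((hderiv (b + 2) w).const_mul z))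
    (hconv _ _ (by simpa)) (hconv_deriv _ _ (by rw [add_re, ofReal_re, one_re]; linarith)) ?_
  have hσ' : 0 < (σ + 1 + 1 : ℂ).re := by
    rw [add_re, add_re, ofReal_re, one_re]
    linarith
  exact (hasMellin_sub ((hconv_deriv _ _ hσ').const_smul b) ((hconv_deriv _ _ hσ').const_smul z)).1

end Kernel

theorem image_div_one_add_Ioi_zero : (fun t : ℝ => t / (1 + t)) '' Ioi 0 = Ioo 0 1 := by
  ext w
  constructor
  · rintro ⟨t, ht : 0 < t, rfl⟩
    exact ⟨by positivity, (div_lt_one (by positivity)).2 (by linarith)⟩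
  · rintro ⟨hw₀, hw₁⟩
    have hpos : 0 < 1 - w := sub_pos.2 hw₁
    exact ⟨w / (1 - w), div_pos hw₀ hpos, by field_simp; ring⟩

theorem injOn_div_one_add : InjOn (fun t : ℝ => t / (1 + t)) (Ioi 0) := by
  intro t (ht : 0 < t) u (hu : 0 < u) h
  have := (div_eq_div_iff (by positivity) (by positivity)).1 h
  linarith

theorem hasDerivAt_div_one_add {t : ℝ} (ht : 1 + t ≠ 0) :
    HasDerivAt (fun t : ℝ => t / (1 + t)) (1 / (1 + t) ^ 2) t :=
  ((hasDerivAt_id t).div ((hasDerivAt_id t).const_add 1) ht).congr_deriv (by simp)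

theorem cpow_smul_hypUMellinKernel_div_one_add (a b z : ℂ) {t : ℝ} (ht : 0 < t) :
    |1 / (1 + t) ^ 2| • ((t / (1 + t) : ℝ) : ℂ) ^ (a - 1) • hypUMellinKernel b z (t / (1 + t)) =
      exp (-z * t) * (t : ℂ) ^ (a - 1) * (1 + t) ^ (b - a - 1) := by
  set r : ℝ := (1 + t)⁻¹ with hr
  have hr_pos : 0 < r := by positivity
  have hdiv : t / (1 + t) = t * r := div_eq_mul_inv t (1 + t)
  have hcompl : 1 - t * r = r := by
    rw [hr]
    field_simp
    ring
  have hlt : t * r < 1 := by linarith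
  have hpow : (1 + t : ℂ) ^ (b - a - 1) = (r : ℂ) ^ 2 * (r : ℂ) ^ (a - 1) * (r : ℂ) ^ (-b) := by
    have hinv : (1 + t : ℂ) = (r : ℂ)⁻¹ := by simp [hr]
    rw [hinv, inv_cpow _ _ (by simp [arg_ofReal_of_nonneg hr_pos.le, Real.pi_ne_zero.symm]),
      ← cpow_neg, ← cpow_ofNat, ← cpow_add _ _ (ofReal_ne_zero.2 hr_pos.ne'),
      ← cpow_add _ _ (ofReal_ne_zero.2 hr_pos.ne')]
    ring_nf
  rw [hdiv, hypUMellinKernel_of_lt_one _ _ hlt, hcompl, mul_div_cancel_right₀ _ hr_pos.ne',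
    hpow, abs_of_pos (by positivity), one_div, ← inv_pow, ofReal_mul,
    mul_cpow_ofReal_nonneg ht.le hr_pos.le, real_smul, smul_eq_mul, ofReal_pow]
  ring

theorem Gamma_mul_hypU {a : ℂ} (ha : 0 < a.re) (b z : ℂ) :
    Gamma a * hypU a b z = mellin (hypUMellinKernel b z) a := by
  rw [hypU, mul_inv_cancel_left₀ (Gamma_ne_zero_of_re_pos ha)]
  calc ∫ t in Ioi (0 : ℝ), exp (-z * t) * (t : ℂ) ^ (a - 1) * (1 + t) ^ (b - a - 1)
      = ∫ t in Ioi (0 : ℝ), |1 / (1 + t) ^ 2| •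
          ((t / (1 + t) : ℝ) : ℂ) ^ (a - 1) • hypUMellinKernel b z (t / (1 + t)) :=
        setIntegral_congr_fun measurableSet_Ioi fun t ht =>
          (cpow_smul_hypUMellinKernel_div_one_add a b z ht).symm
    _ = ∫ w in Ioo (0 : ℝ) 1, (w : ℂ) ^ (a - 1) • hypUMellinKernel b z w := by
        rw [← image_div_one_add_Ioi_zero, integral_image_eq_integral_abs_deriv_smul
          measurableSet_Ioi (fun t ht => (hasDerivAt_div_one_add
            (by linarith [mem_Ioi.1 ht])).hasDerivWithinAt) injOn_div_one_add]
    _ = mellin (hypUMellinKernel b z) a := by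
        refine (setIntegral_eq_of_subset_of_forall_sdiff_eq_zero measurableSet_Ioi
          Ioo_subset_Ioi_self fun w hw => ?_).symm
        rw [hypUMellinKernel_of_one_le _ _ (not_lt.1 fun h => hw.2 ⟨hw.1, h⟩), smul_zero]

theorem magnus_addition_contour_general (a₁ a₂ b₁ b₂ x y σ : ℂ) (hx : 0 < x.re) (hy : 0 < y.re)
    (h₁ : σ.re < a₁.re) (h₂ : -a₂.re < σ.re) :
    Gamma (a₁ + a₂) * hypU (a₁ + a₂) (b₁ + b₂) (x + y) =
      (1 / (2 * (Real.pi : ℂ) * I)) *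
        (I * ∫ τ : ℝ, Gamma (a₁ - (σ + I * τ)) * Gamma (a₂ + (σ + I * τ)) *
          hypU (a₁ - (σ + I * τ)) b₁ x * hypU (a₂ + (σ + I * τ)) b₂ y) := by
  have hintegrand : ∀ τ : ℝ, Gamma (a₁ - (σ + I * τ)) * Gamma (a₂ + (σ + I * τ)) *
      hypU (a₁ - (σ + I * τ)) b₁ x * hypU (a₂ + (σ + I * τ)) b₂ y =
      mellin (hypUMellinKernel b₁ x) (a₁ + a₂ - (a₂ + σ + τ * I)) *
        mellin (hypUMellinKernel b₂ y) (a₂ + σ + τ * I) := fun τ => by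
    rw [show a₁ + a₂ - (a₂ + σ + τ * I) = a₁ - (σ + I * τ) by ring,
      show a₂ + σ + τ * I = a₂ + (σ + I * τ) by ring,
      ← Gamma_mul_hypU (by simpa), ← Gamma_mul_hypU (by simpa [← sub_lt_iff_lt_add'] using h₂)]
    ring
  have hσ : 0 < (a₂ + σ).re := by rw [add_re]; linarith
  have hmellin := mellin_smul (s := a₁ + a₂) (z := a₂ + σ)
    (mellinConvergent_hypUMellinKernel b₁ hx (by rw [sub_re, add_re, add_re]; linarith))
    (mellinConvergent_hypUMellinKernel b₂ hy hσ)
    (verticalIntegrable_mellin_hypUMellinKernel b₂ hy hσ)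
    (continuous_hypUMellinKernel b₂ hy).continuousOn
  simp only [smul_eq_mul, hypUMellinKernel_mul] at hmellin
  rw [Gamma_mul_hypU (by rw [add_re]; linarith), hmellin]
  have hconst : 1 / (2 * (Real.pi : ℂ) * I) * I = (1 / (2 * Real.pi) : ℝ) := by
    push_cast
    field_simp
  simp_rw [← mul_assoc _ I, hconst, hintegrand, real_smul]

/-- Magnus' integral addition theorem on the vertical contour `Re s = Re σ`:
`Γ(c) U(c, 2c, x+y) = (1/(2πi)) ∫_{σ-i∞}^{σ+i∞} Γ(c/2-s) Γ(c/2+s) U(c/2-s,c,x) U(c/2+s,c,y) ds`,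
where the contour integral is `i ∫_ℝ f(σ + iτ) dτ`. -/
theorem magnus_addition_contour (c x y σ : ℂ) (hc : 0 < c.re) (hx : 0 < x.re)
    (hy : 0 < y.re) (hσ : |σ.re| < c.re / 2) :
    Complex.Gamma c * hypU c (2 * c) (x + y) =
      (1 / (2 * (Real.pi : ℂ) * Complex.I)) *
        (Complex.I * ∫ τ : ℝ,
          Complex.Gamma (c / 2 - (σ + Complex.I * τ)) *
          Complex.Gamma (c / 2 + (σ + Complex.I * τ)) *
          hypU (c / 2 - (σ + Complex.I * τ)) c x *
          hypU (c / 2 + (σ + Complex.I * τ)) c y) := by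
  obtain ⟨hlower, hupper⟩ := abs_lt.1 hσ
  simpa [two_mul] using magnus_addition_contour_general (c / 2) (c / 2) c c x y σ hx hy
    (by simpa using hupper) (by simpa using hlower)
end

section
/- Let ξ, η, σ ∈ ℂ with Im(ξ²) < 0, Im(η²) < 0, and |Re σ| < 1/4. Then H₀⁽²⁾((ξ² + η²)/2) = (2^{1/2}/π²) ∫_{σ−i∞}^{σ+i∞} Γ(1/4 − s) Γ(1/4 + s) D_{2s−1/2}((1+i)ξ) D_{−2s−1/2}((1+i)η) ds. (Note that ((1+i)ξ)²/2 = iξ² has positive real part and Im((ξ²+η²)/2) < 0, so all functions appearing are in the domains of the stated representations.) -/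
/-- Parabolic cylinder function `D_ν(z) = 2^{ν/2} e^{-z²/4} U(-ν/2, 1/2, z²/2)`,
valid for `Re ν < 0`, `Re(z²) > 0` (principal branch powers). -/
noncomputable def parD (ν z : ℂ) : ℂ :=
  (2 : ℂ) ^ (ν / 2) * Complex.exp (-z ^ 2 / 4) * hypU (-ν / 2) (1 / 2) (z ^ 2 / 2)

/-- Order-zero Hankel function of the second kind,
`H₀⁽²⁾(ζ) = (2i/√π) e^{-iζ} U(1/2, 1, 2iζ)`, valid for `Im ζ < 0`. -/
noncomputable def hankelH02 (ζ : ℂ) : ℂ :=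
  2 * Complex.I / (Real.sqrt Real.pi : ℂ) * Complex.exp (-Complex.I * ζ) *
    hypU (1 / 2) 1 (2 * Complex.I * ζ)


/-!
Substituting `t = 1 / (eˣ - 1)` in the Laplace integral of `Γ(a) U(a, b, w)` turns it into
`∫ K(x) dx` over `x > 0`, where `K(x) = e^{-ax} (1 + t)^b e^{-wt}`. Along a vertical line
`a + iτ` one therefore sees the Fourier transform of `K`, and pointwise products of kernels add
their parameters `a`, `b` and `w`. Hence Parseval's identity evaluates
`∫ Γ(a - iτ) U(a - iτ, b, w) Γ(c + iτ) U(c + iτ, d, v) dτ` as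
`2π Γ(a + c) U(a + c, b + d, w + v)`; the theorem is the case `b = d = 1/2`, `a + c = 1/2`.
Parseval applies because `K`, extended by zero, is a Schwartz function: it decays exponentially at
`+∞`, and at `0⁺` the factor `e^{-wt}` makes it flat.
-/

open MeasureTheory Set Filter Polynomial
open scoped FourierTransform SchwartzMap ContDiff

section SchwartzFamily

variable {ι E : Type*} [NormedAddCommGroup E] [NormedSpace ℝ E]

theorem exists_schwartzMap_of_hasDerivAt_family {F : ι → ℝ → E} {D : ι → ι}
    (hderiv : ∀ i x, HasDerivAt (F i) (F (D i) x) x)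
    (hdecay : ∀ (k : ℕ) (i : ι), ∃ C, ∀ x, |x| ^ k * ‖F i x‖ ≤ C) (i : ι) :
    ∃ f : 𝓢(ℝ, E), ⇑f = F i := by
  have hiter (n : ℕ) : iteratedDeriv n (F i) = F (D^[n] i) := by
    have hsemi : Function.Semiconj F D deriv := fun j => (funext fun x => (hderiv j x).deriv).symm
    rw [iteratedDeriv_eq_iterate, hsemi.iterate_right n i]
  have hsmooth : ContDiff ℝ ∞ (F i) := contDiff_of_differentiable_iteratedDeriv fun n _ => by
    rw [hiter]
    exact fun x => (hderiv _ x).differentiableAt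
  refine ⟨⟨F i, hsmooth, fun k n => ?_⟩, rfl⟩
  obtain ⟨C, hC⟩ := hdecay k (D^[n] i)
  refine ⟨C, fun x => ?_⟩
  rw [norm_iteratedFDeriv_eq_norm_iteratedDeriv, hiter, Real.norm_eq_abs]
  exact hC x

end SchwartzFamily

section Parseval

variable {V : Type*} [NormedAddCommGroup V] [InnerProductSpace ℝ V] [FiniteDimensional ℝ V]
  [MeasurableSpace V] [BorelSpace V]

theorem integral_fourierInv_mul_fourier (f g : 𝓢(V, ℂ)) :
    ∫ ξ, 𝓕⁻ (f : V → ℂ) ξ * 𝓕 (g : V → ℂ) ξ = ∫ x, f x * g x := by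
  rw [← SchwartzMap.fourierInv_coe, ← SchwartzMap.fourier_coe,
    SchwartzMap.integral_fourierInv_mul_eq, FourierTransform.fourierInv_fourier_eq]

end Parseval

section PolynomialDecay

theorem pow_mul_exp_neg_mul_le {r t : ℝ} (hr : 0 < r) (ht : 0 ≤ t) (n : ℕ) :
    t ^ n * Real.exp (-r * t) ≤ n.factorial / r ^ n := by
  have h := Real.pow_div_factorial_le_exp (r * t) (by positivity) n
  rw [mul_pow, div_le_iff₀ (by positivity)] at h
  rw [neg_mul, Real.exp_neg, ← div_eq_mul_inv, div_le_div_iff₀ (Real.exp_pos _) (by positivity)]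
  linarith

theorem exists_norm_eval_mul_exp_neg_mul_le {R : Type*} [SeminormedRing R] [NormOneClass R]
    {r : ℝ} (hr : 0 < r) (P : R[X]) :
    ∃ C, ∀ z : R, ‖P.eval z‖ * Real.exp (-r * ‖z‖) ≤ C := by
  induction P using Polynomial.induction_on' with
  | add P Q hP hQ =>
    obtain ⟨C, hC⟩ := hP
    obtain ⟨D, hD⟩ := hQ
    refine ⟨C + D, fun z => ?_⟩
    calc ‖(P + Q).eval z‖ * Real.exp (-r * ‖z‖)
        ≤ (‖P.eval z‖ + ‖Q.eval z‖) * Real.exp (-r * ‖z‖) := by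
          rw [eval_add]
          gcongr
          exact norm_add_le _ _
      _ ≤ C + D := by
          rw [add_mul]
          exact add_le_add (hC z) (hD z)
  | monomial n c =>
    refine ⟨‖c‖ * (n.factorial / r ^ n), fun z => ?_⟩
    calc ‖(monomial n c).eval z‖ * Real.exp (-r * ‖z‖)
        ≤ ‖c‖ * ‖z‖ ^ n * Real.exp (-r * ‖z‖) := by
          rw [eval_monomial]
          gcongr
          exact (norm_mul_le _ _).trans (by gcongr; exact norm_pow_le z n)
      _ ≤ ‖c‖ * (n.factorial / r ^ n) := by
          rw [mul_assoc]
          gcongr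
          exact pow_mul_exp_neg_mul_le hr (norm_nonneg z) n

end PolynomialDecay

section BoseEinstein

/-- The Bose–Einstein function `1 / (eˣ - 1)`. On `x > 0` it is the inverse of
`t ↦ log ((1 + t) / t)`, the change of variables that turns the Laplace integral of `hypU` into a
Fourier integral. -/
noncomputable def boseEinstein (x : ℝ) : ℝ := (Real.exp x - 1)⁻¹

variable {x : ℝ}

theorem boseEinstein_pos (hx : 0 < x) : 0 < boseEinstein x :=
  inv_pos.2 (sub_pos.2 (Real.one_lt_exp_iff.2 hx))

theorem one_add_boseEinstein_pos (hx : 0 < x) : 0 < 1 + boseEinstein x :=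
  add_pos one_pos (boseEinstein_pos hx)

theorem one_add_boseEinstein_ne_zero (hx : 0 < x) : (1 + boseEinstein x : ℂ) ≠ 0 := by
  exact_mod_cast (one_add_boseEinstein_pos hx).ne'

theorem norm_one_add_boseEinstein (hx : 0 < x) :
    ‖(1 + boseEinstein x : ℂ)‖ = 1 + boseEinstein x := by
  exact_mod_cast Complex.norm_of_nonneg (one_add_boseEinstein_pos hx).le

theorem exp_mul_boseEinstein (hx : 0 < x) :
    Real.exp x * boseEinstein x = 1 + boseEinstein x := by
  have : Real.exp x - 1 ≠ 0 := (sub_pos.2 (Real.one_lt_exp_iff.2 hx)).ne'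
  rw [boseEinstein]
  field_simp
  ring

theorem boseEinstein_eq_exp_neg_mul (hx : 0 < x) :
    boseEinstein x = Real.exp (-x) * (1 + boseEinstein x) := by
  rw [← exp_mul_boseEinstein hx, ← mul_assoc, ← Real.exp_add, neg_add_cancel, Real.exp_zero,
    one_mul]

theorem one_le_mul_one_add_boseEinstein (hx : 0 < x) : 1 ≤ x * (1 + boseEinstein x) := by
  have hexp : 1 - x ≤ Real.exp (-x) := Real.one_sub_le_exp_neg x
  nlinarith [boseEinstein_eq_exp_neg_mul hx, one_add_boseEinstein_pos hx]

theorem hasDerivAt_boseEinstein (hx : 0 < x) :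
    HasDerivAt boseEinstein (-(boseEinstein x * (1 + boseEinstein x))) x := by
  have hne : Real.exp x - 1 ≠ 0 := (sub_pos.2 (Real.one_lt_exp_iff.2 hx)).ne'
  refine (((Real.hasDerivAt_exp x).sub_const 1).inv hne).congr_deriv ?_
  rw [← exp_mul_boseEinstein hx, boseEinstein]
  field_simp

theorem bijOn_boseEinstein : BijOn boseEinstein (Ioi 0) (Ioi 0) := by
  refine ⟨fun x hx => boseEinstein_pos hx, fun x _ y _ h => ?_, fun t (ht : 0 < t) => ?_⟩
  · exact Real.exp_injective (sub_left_injective (inv_injective h))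
  · have hinv : 0 < t⁻¹ := inv_pos.2 ht
    refine ⟨Real.log (1 + t⁻¹), Real.log_pos (by linarith), ?_⟩
    rw [boseEinstein, Real.exp_log (by linarith), add_sub_cancel_left, inv_inv]

theorem integral_Ioi_eq_integral_comp_boseEinstein {E : Type*} [NormedAddCommGroup E]
    [NormedSpace ℝ E] (g : ℝ → E) :
    ∫ t in Ioi 0, g t =
      ∫ x in Ioi 0, (boseEinstein x * (1 + boseEinstein x)) • g (boseEinstein x) := by
  conv_lhs => rw [← bijOn_boseEinstein.image_eq]
  rw [integral_image_eq_integral_abs_deriv_smul measurableSet_Ioi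
    (fun x hx => (hasDerivAt_boseEinstein hx).hasDerivWithinAt) bijOn_boseEinstein.injOn]
  refine setIntegral_congr_fun measurableSet_Ioi fun x hx => ?_
  simp only [abs_neg, abs_of_pos (mul_pos (boseEinstein_pos hx) (one_add_boseEinstein_pos hx))]

theorem boseEinstein_cpow (hx : 0 < x) (a : ℂ) :
    (boseEinstein x : ℂ) ^ a = Complex.exp (-a * x) * (1 + boseEinstein x : ℂ) ^ a := by
  conv_lhs => rw [boseEinstein_eq_exp_neg_mul hx]
  rw [Complex.ofReal_mul, Complex.mul_cpow_ofReal_nonneg (Real.exp_pos _).le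
    (one_add_boseEinstein_pos hx).le, Complex.cpow_def_of_ne_zero (by simp),
    ← Complex.ofReal_log (Real.exp_pos _).le, Real.log_exp]
  push_cast
  ring_nf

end BoseEinstein

section HypUKernel

/-- The integrand of `Γ(a) U(a, b, w)` in the variable `x` with `t = 1 / (eˣ - 1)`, extended by
zero to `x ≤ 0`. In this variable `a` enters only through the character `e^{-ax}`, so that moving
`a` vertically is taking a Fourier transform. -/
noncomputable def hypUKernel (a b w : ℂ) (x : ℝ) : ℂ :=
  if 0 < x then
    Complex.exp (-a * x) * (1 + boseEinstein x : ℂ) ^ b * Complex.exp (-w * boseEinstein x)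
  else 0

variable {a w : ℂ} {x : ℝ}

theorem hypUKernel_of_pos (hx : 0 < x) (a b w : ℂ) : hypUKernel a b w x =
    Complex.exp (-a * x) * (1 + boseEinstein x : ℂ) ^ b * Complex.exp (-w * boseEinstein x) :=
  if_pos hx

theorem hypUKernel_of_nonpos (hx : x ≤ 0) (a b w : ℂ) : hypUKernel a b w x = 0 :=
  if_neg hx.not_gt

theorem hypUKernel_mul_hypUKernel (a b w c d v : ℂ) (x : ℝ) :
    hypUKernel a b w x * hypUKernel c d v x = hypUKernel (a + c) (b + d) (w + v) x := by
  rcases le_or_gt x 0 with hx | hx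
  · simp only [hypUKernel_of_nonpos hx, mul_zero]
  · simp only [hypUKernel_of_pos hx, Complex.cpow_add _ _ (one_add_boseEinstein_ne_zero hx),
      neg_add, add_mul, Complex.exp_add]
    ring

theorem exp_mul_hypUKernel (s a b w : ℂ) (x : ℝ) :
    Complex.exp (-s * x) * hypUKernel a b w x = hypUKernel (a + s) b w x := by
  rcases le_or_gt x 0 with hx | hx
  · simp only [hypUKernel_of_nonpos hx, mul_zero]
  · simp only [hypUKernel_of_pos hx, neg_add, add_mul, Complex.exp_add]
    ring

theorem integral_hypUKernel (ha : 0 < a.re) (b w : ℂ) :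
    ∫ x, hypUKernel a b w x = Complex.Gamma a * hypU a b w := by
  rw [hypU, mul_inv_cancel_left₀ (Complex.Gamma_ne_zero_of_re_pos ha),
    integral_Ioi_eq_integral_comp_boseEinstein, ← setIntegral_eq_integral_of_forall_compl_eq_zero
      fun x hx => hypUKernel_of_nonpos (not_lt.1 hx) a b w]
  refine setIntegral_congr_fun measurableSet_Ioi fun x (hx : 0 < x) => ?_
  have hn : (boseEinstein x : ℂ) ≠ 0 := by exact_mod_cast (boseEinstein_pos hx).ne'
  have hn1 : (1 + boseEinstein x : ℂ) ≠ 0 := one_add_boseEinstein_ne_zero hx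
  have hn1a : (1 + boseEinstein x : ℂ) ^ a ≠ 0 := by simp [Complex.cpow_eq_zero_iff, hn1]
  simp only [hypUKernel_of_pos hx, Complex.real_smul, Complex.cpow_sub _ _ hn,
    Complex.cpow_sub _ _ hn1, Complex.cpow_one]
  rw [boseEinstein_cpow hx]
  push_cast
  field_simp

section Smoothness

/-- The operator `P ↦ Q` for which `Q(n) K` is the derivative of `P(n) K`, where
`n = boseEinstein` and `K = hypUKernel a b w`; it encodes `n' = -n (1 + n)`. -/
noncomputable def hypUKernelDeriv (a b w : ℂ) (P : ℂ[X]) : ℂ[X] :=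
  P * (C w * (X * (1 + X)) - C b * X - C a) - derivative P * (X * (1 + X))

theorem hasDerivAt_hypUKernel_of_pos (hx : 0 < x) (a b w : ℂ) :
    HasDerivAt (hypUKernel a b w)
      ((w * (boseEinstein x * (1 + boseEinstein x)) - b * boseEinstein x - a) *
        hypUKernel a b w x) x := by
  have hn1 : (1 + boseEinstein x : ℂ) ≠ 0 := one_add_boseEinstein_ne_zero hx
  have hslit : (1 + boseEinstein x : ℂ) ∈ Complex.slitPlane := by
    exact_mod_cast Complex.ofReal_mem_slitPlane.2 (one_add_boseEinstein_pos hx)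
  have hid : HasDerivAt (fun y : ℝ => (y : ℂ)) 1 x := (hasDerivAt_id x).ofReal_comp
  have hn := (hasDerivAt_boseEinstein hx).ofReal_comp
  have hpow := (hasDerivAt_id _ |>.cpow_const (c := b) hslit).comp x (hn.const_add 1)
  have h := ((hid.const_mul (-a)).cexp.mul hpow).mul (hn.const_mul (-w)).cexp
  refine (h.congr_of_eventuallyEq ?_).congr_deriv ?_
  · filter_upwards [Ioi_mem_nhds hx] with y hy using hypUKernel_of_pos hy a b w
  · simp only [hypUKernel_of_pos hx, Complex.cpow_sub _ _ hn1, Complex.cpow_one, Pi.mul_apply,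
      Function.comp_apply, id]
    push_cast
    field_simp
    ring

theorem hasDerivAt_eval_mul_hypUKernel_of_ne_zero (hx : x ≠ 0) (a b w : ℂ) (P : ℂ[X]) :
    HasDerivAt (fun y => P.eval (boseEinstein y : ℂ) * hypUKernel a b w y)
      ((hypUKernelDeriv a b w P).eval (boseEinstein x : ℂ) * hypUKernel a b w x) x := by
  rcases hx.lt_or_gt with hneg | hpos
  · rw [hypUKernel_of_nonpos hneg.le, mul_zero]
    refine (hasDerivAt_const x (0 : ℂ)).congr_of_eventuallyEq ?_
    filter_upwards [Iio_mem_nhds hneg] with y hy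
    rw [hypUKernel_of_nonpos (le_of_lt hy), mul_zero]
  · have hP := (P.hasDerivAt (boseEinstein x : ℂ)).comp x (hasDerivAt_boseEinstein hpos).ofReal_comp
    refine (hP.mul (hasDerivAt_hypUKernel_of_pos hpos a b w)).congr_deriv ?_
    simp only [hypUKernelDeriv, eval_add, eval_sub, eval_mul, eval_C, eval_X, eval_one,
      Function.comp_apply]
    push_cast
    ring

theorem norm_hypUKernel_of_pos (hx : 0 < x) (a b w : ℂ) : ‖hypUKernel a b w x‖ =
    Real.exp (-a.re * x) * (1 + boseEinstein x) ^ b.re * Real.exp (-w.re * boseEinstein x) := by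
  have hcast : (1 + boseEinstein x : ℂ) = ((1 + boseEinstein x : ℝ) : ℂ) := by push_cast; rfl
  rw [hypUKernel_of_pos hx, norm_mul, norm_mul, Complex.norm_exp, Complex.norm_exp, hcast,
    Complex.norm_cpow_eq_rpow_re_of_pos (one_add_boseEinstein_pos hx), Complex.re_mul_ofReal,
    Complex.re_mul_ofReal, Complex.neg_re, Complex.neg_re]

theorem exists_norm_eval_mul_hypUKernel_le_exp (hw : 0 < w.re) (a b : ℂ) (P : ℂ[X]) :
    ∃ C, ∀ x, 0 < x →
      ‖P.eval (boseEinstein x : ℂ) * hypUKernel a b w x‖ ≤ C * Real.exp (-a.re * x) := by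
  obtain ⟨C, hC⟩ := exists_norm_eval_mul_exp_neg_mul_le hw (P * (1 + X) ^ ⌈b.re⌉₊)
  refine ⟨C, fun x hx => ?_⟩
  have hpow : (1 + boseEinstein x) ^ b.re ≤ ‖(1 + boseEinstein x : ℂ) ^ ⌈b.re⌉₊‖ := by
    rw [norm_pow, norm_one_add_boseEinstein hx, ← Real.rpow_natCast]
    exact Real.rpow_le_rpow_of_exponent_le (by linarith [boseEinstein_pos hx]) (Nat.le_ceil _)
  have hCx := hC (boseEinstein x)
  simp only [eval_mul, eval_pow, eval_add, eval_one, eval_X, norm_mul,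
    Complex.norm_of_nonneg (boseEinstein_pos hx).le] at hCx
  calc ‖P.eval (boseEinstein x : ℂ) * hypUKernel a b w x‖
      = ‖P.eval (boseEinstein x : ℂ)‖ * (1 + boseEinstein x) ^ b.re *
          Real.exp (-w.re * boseEinstein x) * Real.exp (-a.re * x) := by
        rw [norm_mul, norm_hypUKernel_of_pos hx]
        ring
    _ ≤ ‖P.eval (boseEinstein x : ℂ)‖ * ‖(1 + boseEinstein x : ℂ) ^ ⌈b.re⌉₊‖ *
          Real.exp (-w.re * boseEinstein x) * Real.exp (-a.re * x) := by gcongr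
    _ ≤ C * Real.exp (-a.re * x) := by gcongr

theorem exists_pow_mul_norm_eval_mul_hypUKernel_le (ha : 0 < a.re) (hw : 0 < w.re) (b : ℂ)
    (k : ℕ) (P : ℂ[X]) :
    ∃ C, ∀ x, |x| ^ k * ‖P.eval (boseEinstein x : ℂ) * hypUKernel a b w x‖ ≤ C := by
  obtain ⟨C, hC⟩ := exists_norm_eval_mul_hypUKernel_le_exp hw a b P
  have hC0 : 0 ≤ C :=
    nonneg_of_mul_nonneg_left ((norm_nonneg _).trans (hC 1 one_pos)) (Real.exp_pos _)
  refine ⟨C * (k.factorial / a.re ^ k), fun x => ?_⟩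
  rcases le_or_gt x 0 with hx | hx
  · rw [hypUKernel_of_nonpos hx, mul_zero, norm_zero, mul_zero]
    positivity
  · calc |x| ^ k * ‖P.eval (boseEinstein x : ℂ) * hypUKernel a b w x‖
        ≤ x ^ k * (C * Real.exp (-a.re * x)) := by
          rw [abs_of_pos hx]
          gcongr
          exact hC x hx
      _ = C * (x ^ k * Real.exp (-a.re * x)) := by ring
      _ ≤ C * (k.factorial / a.re ^ k) := by
          gcongr
          exact pow_mul_exp_neg_mul_le ha hx.le k

-- Since `1 ≤ x (1 + n)`, a bound for the polynomial `P (1 + X)` makes `P(n) K` an `O(x)`.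
theorem continuousAt_zero_eval_mul_hypUKernel (ha : 0 < a.re) (hw : 0 < w.re) (b : ℂ)
    (P : ℂ[X]) :
    ContinuousAt (fun x => P.eval (boseEinstein x : ℂ) * hypUKernel a b w x) 0 := by
  obtain ⟨C, hC⟩ := exists_pow_mul_norm_eval_mul_hypUKernel_le ha hw b 0 (P * (1 + X))
  have hC0 : 0 ≤ C := (mul_nonneg (by positivity) (norm_nonneg _)).trans (hC 0)
  refine continuousAt_of_locally_lipschitz one_pos C fun x _ => ?_
  rw [hypUKernel_of_nonpos le_rfl, mul_zero, dist_zero_right, dist_zero_right, Real.norm_eq_abs]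
  rcases le_or_gt x 0 with hx | hx
  · rw [hypUKernel_of_nonpos hx, mul_zero, norm_zero]
    positivity
  have hCx := hC x
  simp only [pow_zero, one_mul, eval_mul, eval_add, eval_one, eval_X, norm_mul,
    norm_one_add_boseEinstein hx] at hCx
  rw [abs_of_pos hx, norm_mul]
  calc ‖P.eval (boseEinstein x : ℂ)‖ * ‖hypUKernel a b w x‖
      ≤ x * (1 + boseEinstein x) * (‖P.eval (boseEinstein x : ℂ)‖ * ‖hypUKernel a b w x‖) :=
        le_mul_of_one_le_left (by positivity) (one_le_mul_one_add_boseEinstein hx)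
    _ = ‖P.eval (boseEinstein x : ℂ)‖ * (1 + boseEinstein x) * ‖hypUKernel a b w x‖ * x := by ring
    _ ≤ C * x := by gcongr

theorem exists_schwartzMap_eq_hypUKernel (ha : 0 < a.re) (hw : 0 < w.re) (b : ℂ) :
    ∃ f : 𝓢(ℝ, ℂ), ⇑f = hypUKernel a b w := by
  obtain ⟨f, hf⟩ := exists_schwartzMap_of_hasDerivAt_family
    (F := fun (P : ℂ[X]) x => P.eval (boseEinstein x : ℂ) * hypUKernel a b w x)
    (fun P => hasDerivAt_of_hasDerivAt_of_ne'
      (fun x hx => hasDerivAt_eval_mul_hypUKernel_of_ne_zero hx a b w P)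
      (continuousAt_zero_eval_mul_hypUKernel ha hw b P)
      (continuousAt_zero_eval_mul_hypUKernel ha hw b _))
    (exists_pow_mul_norm_eval_mul_hypUKernel_le ha hw b) 1
  exact ⟨f, hf.trans (funext fun x => by rw [eval_one, one_mul])⟩

end Smoothness

theorem fourier_hypUKernel (ha : 0 < a.re) (b w : ℂ) (k : ℝ) :
    𝓕 (hypUKernel a b w) k = Complex.Gamma (a + 2 * Real.pi * Complex.I * k) *
      hypU (a + 2 * Real.pi * Complex.I * k) b w := by
  have hre : (a + 2 * Real.pi * Complex.I * k).re = a.re := by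
    simp
  rw [← integral_hypUKernel (hre ▸ ha), Real.fourier_eq']
  refine integral_congr_ae (.of_forall fun x => ?_)
  simp only [← exp_mul_hypUKernel _ a, smul_eq_mul, Real.inner_apply]
  push_cast
  ring_nf

theorem fourierInv_hypUKernel (ha : 0 < a.re) (b w : ℂ) (k : ℝ) :
    𝓕⁻ (hypUKernel a b w) k = Complex.Gamma (a - 2 * Real.pi * Complex.I * k) *
      hypU (a - 2 * Real.pi * Complex.I * k) b w := by
  rw [Real.fourierInv_eq_fourier_neg, fourier_hypUKernel ha]
  push_cast
  simp only [mul_neg, sub_eq_add_neg]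

end HypUKernel

section Addition

variable {a c : ℂ}

theorem integral_Gamma_mul_hypU_mul {w v : ℂ} (ha : 0 < a.re) (hc : 0 < c.re) (hw : 0 < w.re)
    (hv : 0 < v.re) (b d : ℂ) :
    ∫ τ : ℝ, (Complex.Gamma (a - Complex.I * τ) * hypU (a - Complex.I * τ) b w) *
        (Complex.Gamma (c + Complex.I * τ) * hypU (c + Complex.I * τ) d v) =
      2 * Real.pi * (Complex.Gamma (a + c) * hypU (a + c) (b + d) (w + v)) := by
  obtain ⟨f, hf⟩ := exists_schwartzMap_eq_hypUKernel ha hw b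
  obtain ⟨g, hg⟩ := exists_schwartzMap_eq_hypUKernel hc hv d
  have hfreq (τ : ℝ) : 2 * Real.pi * Complex.I * (τ / (2 * Real.pi) : ℝ) = Complex.I * τ := by
    push_cast
    field_simp
  calc
    _ = ∫ τ : ℝ, 𝓕⁻ (f : ℝ → ℂ) (τ / (2 * Real.pi)) * 𝓕 (g : ℝ → ℂ) (τ / (2 * Real.pi)) := by
        simp only [hf, hg, fourierInv_hypUKernel ha, fourier_hypUKernel hc, hfreq]
    _ = (2 * Real.pi) • ∫ x, f x * g x := by
        rw [Measure.integral_comp_div (fun k => 𝓕⁻ (f : ℝ → ℂ) k * 𝓕 (g : ℝ → ℂ) k),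
          integral_fourierInv_mul_fourier, abs_of_pos Real.two_pi_pos]
    _ = _ := by
        simp only [hf, hg, hypUKernel_mul_hypUKernel]
        rw [integral_hypUKernel (Complex.add_re a c ▸ add_pos ha hc), Complex.real_smul]
        push_cast
        rfl

theorem parD_neg_two_mul (s x : ℂ) :
    parD (-2 * s) x = 2 ^ (-s) * Complex.exp (-x ^ 2 / 4) * hypU s (1 / 2) (x ^ 2 / 2) := by
  rw [parD, show -2 * s / 2 = -s by ring, show -(-2 * s) / 2 = s by ring]

theorem integral_Gamma_mul_parD_mul {x y : ℂ} (ha : 0 < a.re) (hc : 0 < c.re)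
    (hx : 0 < (x ^ 2).re) (hy : 0 < (y ^ 2).re) :
    ∫ τ : ℝ, Complex.Gamma (a - Complex.I * τ) * Complex.Gamma (c + Complex.I * τ) *
        parD (-2 * (a - Complex.I * τ)) x * parD (-2 * (c + Complex.I * τ)) y =
      2 ^ (-(a + c)) * Complex.exp (-(x ^ 2 + y ^ 2) / 4) *
        (2 * Real.pi * (Complex.Gamma (a + c) * hypU (a + c) 1 ((x ^ 2 + y ^ 2) / 2))) := by
  have hhalf {z : ℂ} (hz : 0 < (z ^ 2).re) : 0 < (z ^ 2 / 2).re := by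
    rw [Complex.div_ofNat_re]
    exact half_pos hz
  have htwo (τ : ℝ) :
      (2 : ℂ) ^ (-(a + c)) = 2 ^ (-(a - Complex.I * τ)) * 2 ^ (-(c + Complex.I * τ)) := by
    rw [← Complex.cpow_add _ _ two_ne_zero]
    ring_nf
  have hexp : Complex.exp (-(x ^ 2 + y ^ 2) / 4) =
      Complex.exp (-x ^ 2 / 4) * Complex.exp (-y ^ 2 / 4) := by
    rw [← Complex.exp_add]
    ring_nf
  have hone : (1 : ℂ) = 1 / 2 + 1 / 2 := (add_halves 1).symm
  rw [hone, add_div (x ^ 2), ← integral_Gamma_mul_hypU_mul ha hc (hhalf hx) (hhalf hy),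
    ← integral_const_mul]
  refine integral_congr_ae (.of_forall fun τ => ?_)
  simp only [parD_neg_two_mul, htwo τ, hexp]
  ring

theorem integral_Gamma_mul_parD_one_add_I_mul {ξ η : ℂ} (ha : 0 < a.re) (hc : 0 < c.re)
    (hξ : (ξ ^ 2).im < 0) (hη : (η ^ 2).im < 0) :
    ∫ τ : ℝ, Complex.Gamma (a - Complex.I * τ) * Complex.Gamma (c + Complex.I * τ) *
        parD (-2 * (a - Complex.I * τ)) ((1 + Complex.I) * ξ) *
        parD (-2 * (c + Complex.I * τ)) ((1 + Complex.I) * η) =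
      2 ^ (-(a + c)) * Complex.exp (-Complex.I * ((ξ ^ 2 + η ^ 2) / 2)) *
        (2 * Real.pi * (Complex.Gamma (a + c) *
          hypU (a + c) 1 (2 * Complex.I * ((ξ ^ 2 + η ^ 2) / 2)))) := by
  have hsq (z : ℂ) : ((1 + Complex.I) * z) ^ 2 = 2 * (Complex.I * z ^ 2) := by
    rw [mul_pow, add_sq, Complex.I_sq]
    ring
  have hre {z : ℂ} (hz : (z ^ 2).im < 0) : 0 < (((1 + Complex.I) * z) ^ 2).re := by
    rw [hsq, two_mul, Complex.add_re, Complex.I_mul_re]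
    linarith
  rw [integral_Gamma_mul_parD_mul ha hc (hre hξ) (hre hη), hsq, hsq]
  ring_nf

theorem hankelH02_eq_Gamma_mul_hypU (ζ : ℂ) :
    hankelH02 ζ = 2 * Complex.I / Real.pi * Complex.exp (-Complex.I * ζ) *
      (Complex.Gamma (1 / 2) * hypU (1 / 2) 1 (2 * Complex.I * ζ)) := by
  have hsqrt : (Real.sqrt Real.pi : ℂ) ^ 2 = Real.pi := by
    exact_mod_cast Real.sq_sqrt Real.pi_pos.le
  have hsqrt_ne : (Real.sqrt Real.pi : ℂ) ≠ 0 := by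
    exact_mod_cast (Real.sqrt_pos.2 Real.pi_pos).ne'
  have hGamma : Complex.Gamma (1 / 2) = Real.sqrt Real.pi := by
    rw [← Real.Gamma_one_half_eq, ← Complex.Gamma_ofReal]
    norm_num
  rw [hankelH02, hGamma, ← hsqrt]
  field_simp

end Addition

/-- Magnus' 1941 addition theorem for the order-zero Hankel function of the second kind. -/
theorem hankelH02_addition (ξ η σ : ℂ) (hξ : (ξ ^ 2).im < 0) (hη : (η ^ 2).im < 0)
    (hσ : |σ.re| < 1 / 4) :
    hankelH02 ((ξ ^ 2 + η ^ 2) / 2) =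
      ((2 : ℂ) ^ ((1 : ℂ) / 2) / (Real.pi : ℂ) ^ 2) *
        (Complex.I * ∫ τ : ℝ,
          Complex.Gamma (1 / 4 - (σ + Complex.I * τ)) *
          Complex.Gamma (1 / 4 + (σ + Complex.I * τ)) *
          parD (2 * (σ + Complex.I * τ) - 1 / 2) ((1 + Complex.I) * ξ) *
          parD (-2 * (σ + Complex.I * τ) - 1 / 2) ((1 + Complex.I) * η)) := by
  obtain ⟨hσl, hσr⟩ := abs_lt.1 hσ
  have hquarter : (1 / 4 : ℂ).re = 1 / 4 := by norm_num
  have ha : 0 < (1 / 4 - σ).re := by rw [Complex.sub_re, hquarter]; linarith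
  have hc : 0 < (1 / 4 + σ).re := by rw [Complex.add_re, hquarter]; linarith
  have hsum : 1 / 4 - σ + (1 / 4 + σ) = 1 / 2 := by ring
  have hξindex (s : ℂ) : 2 * (σ + s) - 1 / 2 = -2 * (1 / 4 - σ - s) := by ring
  have hηindex (s : ℂ) : -2 * (σ + s) - 1 / 2 = -2 * (1 / 4 + σ + s) := by ring
  have hconst : (2 : ℂ) ^ (1 / 2 : ℂ) / Real.pi ^ 2 * (2 ^ (-(1 / 2) : ℂ) * (2 * Real.pi)) =
      2 / Real.pi := by
    rw [Complex.cpow_neg]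
    field_simp
  simp only [hξindex, hηindex, ← sub_sub, ← add_assoc]
  rw [integral_Gamma_mul_parD_one_add_I_mul ha hc hξ hη, hsum, hankelH02_eq_Gamma_mul_hypU]
  linear_combination (-Complex.I * Complex.exp (-Complex.I * ((ξ ^ 2 + η ^ 2) / 2)) *
    (Complex.Gamma (1 / 2) * hypU (1 / 2) 1 (2 * Complex.I * ((ξ ^ 2 + η ^ 2) / 2)))) * hconst
end

section
/- Let ξ, η, σ ∈ ℂ with Im(ξ²) > 0, Im(η²) > 0, and |Re σ| < 1/4. Then H₀⁽¹⁾((ξ² + η²)/2) = −(2^{1/2}/π²) ∫_{σ−i∞}^{σ+i∞} Γ(1/4 − s) Γ(1/4 + s) D_{2s−1/2}((1−i)ξ) D_{−2s−1/2}((1−i)η) ds. (Note that ((1−i)ξ)²/2 = −iξ² has positive real part and Im((ξ²+η²)/2) > 0, so all functions appearing are in the domains of the stated representations.) -/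
/-- Order-zero Hankel function of the first kind,
`H₀⁽¹⁾(ζ) = (-2i/√π) e^{iζ} U(1/2, 1, -2iζ)`, valid for `Im ζ > 0`. -/
noncomputable def hankelH01 (ζ : ℂ) : ℂ :=
  -2 * Complex.I / (Real.sqrt Real.pi : ℂ) * Complex.exp (Complex.I * ζ) *
    hypU (1 / 2) 1 (-2 * Complex.I * ζ)

/-!
The substitution `t = w / (1 - w)` turns `Γ(a) U(a, b, z)` into the Mellin transform at `a` of the
Laguerre generating function `g_{b,z}(w) = e^{-z w / (1 - w)} (1 - w)^{-b}` on `0 < w < 1`. Since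
`g_{b,p} g_{b',q} = g_{b+b',p+q}`, the Mellin convolution theorem evaluates the contour integral of
a product of two functions `U` as a single `U`; parabolic cylinder functions are the case
`b = b' = 1/2`, and then `b + b' = 1` gives the Hankel function. Integrating by parts with
`g_b' = b g_{b+1} - z g_{b+2}` trades a factor `s` for a shift of `s` and `b`, so the Mellin
transforms decay faster than any power on vertical lines, as Mellin inversion requires.
-/

open MeasureTheory Set Filter Complex
open scoped Real Topology

section Mellin

variable {E : Type*} [NormedAddCommGroup E] [NormedSpace ℂ E]

lemma norm_mellin_le (f : ℝ → E) (s : ℂ) :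
    ‖mellin f s‖ ≤ ∫ x in Ioi (0 : ℝ), x ^ (s.re - 1) * ‖f x‖ := by
  refine (norm_integral_le_integral_norm _).trans_eq
    (setIntegral_congr_fun measurableSet_Ioi fun x hx => ?_)
  simp only [norm_smul, norm_cpow_eq_rpow_re_of_pos hx, sub_re, one_re]

lemma mellin_add_one_of_hasDerivAt {f f' : ℝ → ℂ} {s : ℂ}
    (hderiv : ∀ x ∈ Ioi (0 : ℝ), HasDerivAt f (f' x) x)
    (hf : MellinConvergent f s) (hf' : MellinConvergent f' (s + 1))
    (hzero : Tendsto (fun x : ℝ => (x : ℂ) ^ s * f x) (𝓝[>] 0) (𝓝 0))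
    (htop : Tendsto (fun x : ℝ => (x : ℂ) ^ s * f x) atTop (𝓝 0)) :
    mellin f' (s + 1) = -(s * mellin f s) := by
  have hpow : ∀ x ∈ Ioi (0 : ℝ),
      HasDerivAt (fun x : ℝ => (x : ℂ) ^ s) (s * (x : ℂ) ^ (s - 1)) x := fun x hx => by
    simpa only [id, mul_one] using
      ((hasDerivAt_id (x : ℂ)).cpow_const (c := s) (ofReal_mem_slitPlane.2 hx)).comp_ofReal
  simp only [MellinConvergent, mellin, smul_eq_mul, add_sub_cancel_right] at *
  have hparts := integral_Ioi_mul_deriv_eq_deriv_mul hpow hderiv hf'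
    (by simpa only [IntegrableOn, Pi.mul_def, mul_assoc] using Integrable.const_mul hf s) hzero htop
  simp only [mul_assoc] at hparts
  rw [hparts, integral_const_mul, sub_zero, zero_sub]

lemma integral_cpow_neg_smul_mellin [CompleteSpace E] {g : ℝ → E} {σ : ℝ}
    (hg : MellinConvergent g σ) (hint : VerticalIntegrable (mellin g) σ)
    {x : ℝ} (hx : 0 < x) (hcont : ContinuousAt g x) :
    ∫ y : ℝ, (x : ℂ) ^ (-(σ + y * I) : ℂ) • mellin g (σ + y * I) = (2 * π : ℝ) • g x := by
  rw [← mellinInv_mellin_eq σ g hx hg hint hcont, mellinInv, smul_smul,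
    mul_one_div_cancel Real.two_pi_pos.ne', one_smul]

lemma integrable_uncurry_cpow_mul_smul {F : ℝ → ℂ} {G : ℝ → E} (hF : IntegrableOn F (Ioi 0))
    (hG : Integrable G) :
    Integrable (Function.uncurry fun (y x : ℝ) => ((x : ℂ) ^ (-(y * I)) * F x) • G y)
      (volume.prod (volume.restrict (Ioi 0))) := by
  have hprod : Integrable (fun z : ℝ × ℝ => F z.2 • G z.1)
      (volume.prod (volume.restrict (Ioi 0))) := (Integrable.smul_prod hF hG).swap
  have hpos : ∀ᵐ z : ℝ × ℝ ∂(volume.prod (volume.restrict (Ioi (0 : ℝ)))), z.2 ∈ Ioi (0 : ℝ) :=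
    Measure.quasiMeasurePreserving_snd.ae (ae_restrict_mem measurableSet_Ioi)
  simp only [mul_smul]
  refine hprod.bdd_smul 1 (Measurable.aestronglyMeasurable (by fun_prop)) ?_
  filter_upwards [hpos] with z hz
  simp [norm_cpow_eq_rpow_re_of_pos hz]

theorem integral_mellin_smul_mellin [CompleteSpace E] {f : ℝ → ℂ} {g : ℝ → E} {s : ℂ} {σ : ℝ}
    (hf : MellinConvergent f (s - σ)) (hg : MellinConvergent g σ)
    (hint : VerticalIntegrable (mellin g) σ) (hcont : ContinuousOn g (Ioi 0)) :
    ∫ y : ℝ, mellin f (s - (σ + y * I)) • mellin g (σ + y * I) =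
      (2 * π : ℝ) • mellin (fun x => f x • g x) s := by
  set F : ℝ → ℂ := fun x => (x : ℂ) ^ (s - σ - 1) • f x
  set G : ℝ → E := fun y => mellin g (σ + y * I)
  have hpow : ∀ x ∈ Ioi (0 : ℝ), ∀ u v : ℂ, (x : ℂ) ^ u * (x : ℂ) ^ v = (x : ℂ) ^ (u + v) :=
    fun x hx u v => (cpow_add u v (ofReal_ne_zero.2 (ne_of_gt hx))).symm
  calc ∫ y : ℝ, mellin f (s - (σ + y * I)) • G y
      = ∫ y : ℝ, ∫ x in Ioi (0 : ℝ), ((x : ℂ) ^ (-(y * I)) * F x) • G y := by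
        refine integral_congr_ae (.of_forall fun y => ?_)
        simp only [integral_smul_const]
        congr 1
        refine setIntegral_congr_fun measurableSet_Ioi fun x hx => ?_
        simp only [F, smul_eq_mul, ← mul_assoc, hpow x hx]
        ring_nf
    _ = ∫ x in Ioi (0 : ℝ), ∫ y : ℝ, ((x : ℂ) ^ (-(y * I)) * F x) • G y :=
        integral_integral_swap (integrable_uncurry_cpow_mul_smul hf hint)
    _ = ∫ x in Ioi (0 : ℝ), (2 * π : ℝ) • ((x : ℂ) ^ (s - 1) • f x • g x) := by
        refine setIntegral_congr_fun measurableSet_Ioi fun x hx => ?_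
        rw [smul_comm, smul_comm _ (f x),
          ← integral_cpow_neg_smul_mellin hg hint hx (hcont.continuousAt (Ioi_mem_nhds hx)),
          ← integral_smul, ← integral_smul]
        refine integral_congr_ae (.of_forall fun y => ?_)
        simp only [F, G, smul_smul, smul_eq_mul, mul_left_comm _ (f x), ← mul_assoc (_ ^ _),
          hpow x hx]
        ring_nf
    _ = (2 * π : ℝ) • mellin (fun x => f x • g x) s := integral_smul _ _

end Mellin

lemma integral_add_mul_I_eq_re {E : Type*} [NormedAddCommGroup E] [NormedSpace ℝ E]
    (F : ℂ → E) (σ : ℂ) : ∫ y : ℝ, F (σ + y * I) = ∫ y : ℝ, F (σ.re + y * I) := by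
  rw [← integral_add_left_eq_self (fun y : ℝ => F (σ.re + y * I)) σ.im]
  refine integral_congr_ae (.of_forall fun y => ?_)
  conv_lhs => rw [← re_add_im σ]
  push_cast
  ring_nf

/-- The generating function `∑ Lₙ^(b-1)(z) wⁿ` of the Laguerre polynomials, cut off at its
singularity `w = 1`. Its Mellin transform at `a` is `Γ(a) U(a, b, z)`. -/
noncomputable def laguerreGen (b z : ℂ) : ℝ → ℂ :=
  (Iio 1).indicator fun w => exp (-z * (w / (1 - w))) * (1 - w : ℂ) ^ (-b)

section LaguerreGen

lemma one_sub_ofReal_mem_slitPlane {w : ℝ} (hw : w < 1) : (1 - w : ℂ) ∈ slitPlane := by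
  exact_mod_cast ofReal_mem_slitPlane.2 (sub_pos.2 hw)

lemma laguerreGen_of_lt (b z : ℂ) {w : ℝ} (hw : w < 1) :
    laguerreGen b z w = exp (-z * (w / (1 - w))) * (1 - w : ℂ) ^ (-b) :=
  indicator_of_mem (mem_Iio.2 hw) _

lemma laguerreGen_of_le (b z : ℂ) {w : ℝ} (hw : 1 ≤ w) : laguerreGen b z w = 0 :=
  indicator_of_notMem (notMem_Iio.2 hw) _

lemma laguerreGen_mul_laguerreGen (b b' z z' : ℂ) (w : ℝ) :
    laguerreGen b z w * laguerreGen b' z' w = laguerreGen (b + b') (z + z') w := by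
  rcases lt_or_ge w 1 with hw | hw
  · simp only [laguerreGen_of_lt _ _ hw]
    rw [neg_add b, cpow_add _ _ (slitPlane_ne_zero (one_sub_ofReal_mem_slitPlane hw)),
      neg_add z, add_mul, exp_add]
    ring
  · simp only [laguerreGen_of_le _ _ hw, mul_zero]

lemma hasDerivAt_laguerreGen_of_lt (b z : ℂ) {w : ℝ} (hw : w < 1) :
    HasDerivAt (laguerreGen b z)
      (b * laguerreGen (b + 1) z w - z * laguerreGen (b + 2) z w) w := by
  have hslit := one_sub_ofReal_mem_slitPlane hw
  have hne : (1 - w : ℂ) ≠ 0 := slitPlane_ne_zero hslit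
  have hsub : HasDerivAt (fun u : ℂ => 1 - u) (-1) w := (hasDerivAt_id (w : ℂ)).const_sub 1
  have hexp := (((hasDerivAt_id (w : ℂ)).div hsub hne).const_mul (-z)).cexp
  have hformula := (hexp.mul (hsub.cpow_const (c := -b) hslit)).comp_ofReal
  refine (hformula.congr_of_eventuallyEq ?_).congr_deriv ?_
  · filter_upwards [Iio_mem_nhds hw] with u hu
    simp [laguerreGen_of_lt _ _ hu]
  · simp only [laguerreGen_of_lt _ _ hw, neg_add, cpow_add _ _ hne, cpow_sub _ _ hne, cpow_neg,
      cpow_one, cpow_ofNat, id, Pi.div_apply]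
    field_simp
    ring

lemma tendsto_laguerreGen_nhdsLT_one (b : ℂ) {z : ℂ} (hz : 0 < z.re) :
    Tendsto (laguerreGen b z) (𝓝[<] 1) (𝓝 0) := by
  -- In the variable `u = 1 / (1 - w) → ∞` the norm is `u ^ (re b) * exp (-re z * (u - 1))`.
  have hu : Tendsto (fun w : ℝ => (1 - w)⁻¹) (𝓝[<] 1) atTop := by
    refine tendsto_inv_nhdsGT_zero.comp (tendsto_nhdsWithin_iff.2 ⟨?_, ?_⟩)
    · exact (Continuous.tendsto' (by fun_prop) _ _ (sub_self 1)).mono_left nhdsWithin_le_nhds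
    · filter_upwards [self_mem_nhdsWithin] with w (hw : w < 1) using sub_pos.2 hw
  have hdecay := ((tendsto_rpow_mul_exp_neg_mul_atTop_nhds_zero b.re z.re hz).comp hu).const_mul
    (Real.exp z.re)
  rw [mul_zero] at hdecay
  refine squeeze_zero_norm' ?_ hdecay
  filter_upwards [self_mem_nhdsWithin] with w (hw : w < 1)
  have hpos : 0 < 1 - w := sub_pos.2 hw
  have hexp : (-z * (w / (1 - w))).re = z.re + -z.re * (1 - w)⁻¹ := by
    rw [show (-z * (w / (1 - w)) : ℂ) = -z * ((w / (1 - w) : ℝ) : ℂ) by push_cast; rfl,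
      re_mul_ofReal, neg_re]
    field_simp
    ring
  have hpow : ‖(1 - w : ℂ) ^ (-b)‖ = (1 - w)⁻¹ ^ b.re := by
    rw [show (1 - w : ℂ) = ((1 - w : ℝ) : ℂ) by push_cast; rfl,
      norm_cpow_eq_rpow_re_of_pos hpos, neg_re, Real.inv_rpow hpos.le, Real.rpow_neg hpos.le]
  rw [laguerreGen_of_lt b z hw, norm_mul, norm_exp, hexp, hpow, Real.exp_add]
  exact le_of_eq (by simp only [Function.comp_apply]; ring)

lemma hasDerivAt_laguerreGen_of_gt (b z : ℂ) {w : ℝ} (hw : 1 < w) :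
    HasDerivAt (laguerreGen b z)
      (b * laguerreGen (b + 1) z w - z * laguerreGen (b + 2) z w) w := by
  simp only [laguerreGen_of_le _ _ hw.le, mul_zero, sub_zero]
  refine (hasDerivAt_const w (0 : ℂ)).congr_of_eventuallyEq ?_
  filter_upwards [Ioi_mem_nhds hw] with u hu using laguerreGen_of_le _ _ (le_of_lt hu)

lemma hasDerivAt_laguerreGen_of_ne (b z : ℂ) {w : ℝ} (hw : w ≠ 1) :
    HasDerivAt (laguerreGen b z)
      (b * laguerreGen (b + 1) z w - z * laguerreGen (b + 2) z w) w :=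
  hw.lt_or_gt.elim (hasDerivAt_laguerreGen_of_lt b z) (hasDerivAt_laguerreGen_of_gt b z)

lemma continuous_laguerreGen (b : ℂ) {z : ℂ} (hz : 0 < z.re) : Continuous (laguerreGen b z) := by
  refine continuous_iff_continuousAt.2 fun w => ?_
  rcases eq_or_ne w 1 with rfl | hw
  · refine continuousAt_iff_continuous_left'_right'.2 ⟨?_, ?_⟩
    · simpa only [ContinuousWithinAt, laguerreGen_of_le b z le_rfl]
        using tendsto_laguerreGen_nhdsLT_one b hz
    · exact (continuousWithinAt_const (b := (0 : ℂ))).congr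
        (fun u hu => laguerreGen_of_le b z (le_of_lt hu)) (laguerreGen_of_le b z le_rfl)
  · exact (hasDerivAt_laguerreGen_of_ne b z hw).continuousAt

lemma hasDerivAt_laguerreGen (b : ℂ) {z : ℂ} (hz : 0 < z.re) (w : ℝ) :
    HasDerivAt (laguerreGen b z)
      (b * laguerreGen (b + 1) z w - z * laguerreGen (b + 2) z w) w :=
  hasDerivAt_of_hasDerivAt_of_ne' (fun _ => hasDerivAt_laguerreGen_of_ne b z)
    (continuous_laguerreGen b hz).continuousAt
    (((continuous_laguerreGen (b + 1) hz).const_mul b).sub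
      ((continuous_laguerreGen (b + 2) hz).const_mul z)).continuousAt w

end LaguerreGen

section MellinLaguerreGen

lemma tendsto_cpow_mul_laguerreGen_zero (b : ℂ) {z s : ℂ} (hz : 0 < z.re) (hs : 0 < s.re) :
    Tendsto (fun w : ℝ => (w : ℂ) ^ s * laguerreGen b z w) (𝓝[>] 0) (𝓝 0) := by
  refine (Continuous.tendsto' ?_ 0 0 ?_).mono_left nhdsWithin_le_nhds
  · exact (continuous_ofReal_cpow_const hs).mul (continuous_laguerreGen b hz)
  · have hs0 : s ≠ 0 := fun h => hs.ne' (by rw [h, zero_re])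
    rw [ofReal_zero, zero_cpow hs0, zero_mul]

lemma laguerreGen_eventuallyEq_zero (b z : ℂ) : laguerreGen b z =ᶠ[atTop] 0 :=
  (eventually_ge_atTop 1).mono fun _ => laguerreGen_of_le b z

lemma laguerreGen_isBigO_atTop (b z : ℂ) (r : ℝ) :
    laguerreGen b z =O[atTop] fun w : ℝ => w ^ r :=
  (laguerreGen_eventuallyEq_zero b z).trans_isBigO (Asymptotics.isBigO_zero _ _)

lemma laguerreGen_isBigO_nhdsGT_zero (b : ℂ) {z : ℂ} (hz : 0 < z.re) :
    laguerreGen b z =O[𝓝[>] 0] fun w : ℝ => w ^ (-0 : ℝ) := by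
  simpa only [neg_zero, Real.rpow_zero] using
    ((continuous_laguerreGen b hz).continuousAt.isBigO_one ℝ).mono nhdsWithin_le_nhds

lemma mellinConvergent_laguerreGen (b : ℂ) {z s : ℂ} (hz : 0 < z.re) (hs : 0 < s.re) :
    MellinConvergent (laguerreGen b z) s :=
  mellinConvergent_of_isBigO_rpow
    ((continuous_laguerreGen b hz).locallyIntegrable.locallyIntegrableOn _)
    (laguerreGen_isBigO_atTop b z _) (lt_add_one s.re) (laguerreGen_isBigO_nhdsGT_zero b hz) hs

lemma differentiableAt_mellin_laguerreGen (b : ℂ) {z s : ℂ} (hz : 0 < z.re) (hs : 0 < s.re) :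
    DifferentiableAt ℂ (mellin (laguerreGen b z)) s :=
  mellin_differentiableAt_of_isBigO_rpow
    ((continuous_laguerreGen b hz).locallyIntegrable.locallyIntegrableOn _)
    (laguerreGen_isBigO_atTop b z _) (lt_add_one s.re) (laguerreGen_isBigO_nhdsGT_zero b hz) hs

lemma mul_mellin_laguerreGen (b : ℂ) {z s : ℂ} (hz : 0 < z.re) (hs : 0 < s.re) :
    s * mellin (laguerreGen b z) s =
      z * mellin (laguerreGen (b + 2) z) (s + 1) - b * mellin (laguerreGen (b + 1) z) (s + 1) := by
  have hs1 : 0 < (s + 1).re := by rw [add_re, one_re]; positivity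
  have hconv : ∀ c d : ℂ, MellinConvergent (fun w => d • laguerreGen c z w) (s + 1) :=
    fun c d => (mellinConvergent_laguerreGen c hz hs1).const_smul d
  obtain ⟨hconv', hsplit⟩ := hasMellin_sub (hconv (b + 1) b) (hconv (b + 2) z)
  have htop : Tendsto (fun w : ℝ => (w : ℂ) ^ s * laguerreGen b z w) atTop (𝓝 0) :=
    tendsto_const_nhds.congr' <| (laguerreGen_eventuallyEq_zero b z).mono fun w hw => by
      simp only [hw, Pi.zero_apply, mul_zero]
  have hparts := mellin_add_one_of_hasDerivAt (fun w _ => hasDerivAt_laguerreGen b hz w)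
    (mellinConvergent_laguerreGen b hz hs) hconv'
    (tendsto_cpow_mul_laguerreGen_zero b hz hs) htop
  simp only [mellin_const_smul] at hsplit
  simp only [smul_eq_mul] at hsplit hparts
  linear_combination hparts - hsplit

lemma exists_norm_pow_mul_norm_mellin_laguerreGen_le {z : ℂ} (hz : 0 < z.re) (n : ℕ) :
    ∀ (b : ℂ) {c : ℝ}, 0 < c →
      ∃ C, ∀ s : ℂ, s.re = c → ‖s‖ ^ n * ‖mellin (laguerreGen b z) s‖ ≤ C := by
  induction n with
  | zero => exact fun b c _ => ⟨_, fun s hs => by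
      simpa only [pow_zero, one_mul, hs] using norm_mellin_le (laguerreGen b z) s⟩
  | succ n ih =>
    intro b c hc
    obtain ⟨C₁, hC₁⟩ := ih (b + 1) (add_pos hc one_pos)
    obtain ⟨C₂, hC₂⟩ := ih (b + 2) (add_pos hc one_pos)
    refine ⟨‖z‖ * C₂ + ‖b‖ * C₁, fun s hs => ?_⟩
    have hs1 : (s + 1).re = c + 1 := by rw [add_re, one_re, hs]
    have hmono : ‖s‖ ≤ ‖s + 1‖ := by
      rw [norm_def, norm_def]
      refine Real.sqrt_le_sqrt ?_
      simp only [normSq_apply, hs1, hs, add_im, one_im, add_zero]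
      nlinarith
    calc ‖s‖ ^ (n + 1) * ‖mellin (laguerreGen b z) s‖
        = ‖s‖ ^ n * ‖s * mellin (laguerreGen b z) s‖ := by rw [norm_mul]; ring
      _ ≤ ‖s + 1‖ ^ n * (‖z * mellin (laguerreGen (b + 2) z) (s + 1)‖ +
            ‖b * mellin (laguerreGen (b + 1) z) (s + 1)‖) := by
          rw [mul_mellin_laguerreGen b hz (hs ▸ hc)]
          gcongr
          exact norm_sub_le _ _
      _ = ‖z‖ * (‖s + 1‖ ^ n * ‖mellin (laguerreGen (b + 2) z) (s + 1)‖) +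
            ‖b‖ * (‖s + 1‖ ^ n * ‖mellin (laguerreGen (b + 1) z) (s + 1)‖) := by
          rw [norm_mul, norm_mul]; ring
      _ ≤ ‖z‖ * C₂ + ‖b‖ * C₁ := by gcongr; exacts [hC₂ _ hs1, hC₁ _ hs1]

lemma verticalIntegrable_mellin_laguerreGen (b : ℂ) {z : ℂ} (hz : 0 < z.re) {c : ℝ} (hc : 0 < c) :
    VerticalIntegrable (mellin (laguerreGen b z)) c := by
  obtain ⟨C₀, hC₀⟩ := exists_norm_pow_mul_norm_mellin_laguerreGen_le hz 0 b hc
  obtain ⟨C₂, hC₂⟩ := exists_norm_pow_mul_norm_mellin_laguerreGen_le hz 2 b hc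
  have hre : ∀ y : ℝ, (c + y * I : ℂ).re = c := fun y => by simp
  have hcont : Continuous fun y : ℝ => mellin (laguerreGen b z) (c + y * I) :=
    continuous_iff_continuousAt.2 fun y =>
      (differentiableAt_mellin_laguerreGen b hz (by rwa [hre])).continuousAt.comp
        (f := fun y : ℝ => (c + y * I : ℂ)) (by fun_prop)
  refine (integrable_inv_one_add_sq.const_mul (C₀ + C₂)).mono' hcont.aestronglyMeasurable
    (.of_forall fun y => ?_)
  have hy : y ^ 2 ≤ ‖(c + y * I : ℂ)‖ ^ 2 := by
    rw [Complex.sq_norm, normSq_add_mul_I]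
    exact le_add_of_nonneg_left (sq_nonneg c)
  rw [← div_eq_mul_inv, le_div_iff₀ (by positivity)]
  calc ‖mellin (laguerreGen b z) (c + y * I)‖ * (1 + y ^ 2)
      = ‖(c + y * I : ℂ)‖ ^ 0 * ‖mellin (laguerreGen b z) (c + y * I)‖ +
          y ^ 2 * ‖mellin (laguerreGen b z) (c + y * I)‖ := by ring
    _ ≤ C₀ + C₂ := by
        gcongr
        · exact hC₀ _ (hre y)
        · exact (by gcongr : _ ≤ _).trans (hC₂ _ (hre y))

lemma image_div_one_sub : (fun w : ℝ => w / (1 - w)) '' Ioo 0 1 = Ioi 0 := by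
  ext t
  constructor
  · rintro ⟨w, ⟨h0, h1⟩, rfl⟩
    exact div_pos h0 (sub_pos.2 h1)
  · intro (ht : 0 < t)
    refine ⟨t / (1 + t), ⟨by positivity, by rw [div_lt_one (by positivity)]; linarith⟩, ?_⟩
    have : 1 - t / (1 + t) = 1 / (1 + t) := by field_simp; ring
    simp only [this]
    field_simp

lemma monotoneOn_div_one_sub : MonotoneOn (fun w : ℝ => w / (1 - w)) (Ioo 0 1) :=
  fun _ _ _ hv hle => div_le_div₀ hv.1.le hle (sub_pos.2 hv.2) (sub_le_sub_left hle 1)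

lemma hasDerivAt_div_one_sub {w : ℝ} (hw : w ≠ 1) :
    HasDerivAt (fun w : ℝ => w / (1 - w)) (1 / (1 - w) ^ 2) w :=
  ((hasDerivAt_id w).div ((hasDerivAt_id w).const_sub 1) (sub_ne_zero.2 hw.symm)).congr_deriv
    (by simp)

lemma hypU_integrand_div_one_sub (a b z : ℂ) {w : ℝ} (hw : w ∈ Ioo (0 : ℝ) 1) :
    (1 / (1 - w) ^ 2) • (exp (-z * (w / (1 - w) : ℝ)) * ((w / (1 - w) : ℝ) : ℂ) ^ (a - 1) *
      (1 + (w / (1 - w) : ℝ) : ℂ) ^ (b - a - 1)) = (w : ℂ) ^ (a - 1) • laguerreGen b z w := by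
  have hpos : 0 < 1 - w := sub_pos.2 hw.2
  have hne : (1 - w : ℂ) ≠ 0 := slitPlane_ne_zero (one_sub_ofReal_mem_slitPlane hw.2)
  have harg : (1 - w : ℂ).arg ≠ π := by
    rw [← ofReal_one, ← ofReal_sub, arg_ofReal_of_nonneg hpos.le]
    exact Real.pi_pos.ne
  have hratio : ((w / (1 - w) : ℝ) : ℂ) ^ (a - 1) =
      (w : ℂ) ^ (a - 1) * (1 - w : ℂ) ^ (-(a - 1)) := by
    rw [div_eq_mul_inv, ofReal_mul, mul_cpow_ofReal_nonneg hw.1.le (inv_nonneg.2 hpos.le), cpow_neg,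
      ofReal_inv, ofReal_sub, ofReal_one, inv_cpow _ _ harg]
  have hone_add : (1 + (w / (1 - w) : ℝ) : ℂ) = (1 - w : ℂ)⁻¹ := by
    push_cast
    field_simp
    ring
  have hpow : (1 - w : ℂ) ^ (-b) * (1 - w : ℂ) ^ 2 =
      (1 - w : ℂ) ^ (-(a - 1)) * (1 - w : ℂ) ^ (-(b - a - 1)) := by
    rw [← cpow_ofNat, ← cpow_add _ _ hne, ← cpow_add _ _ hne]
    ring_nf
  rw [laguerreGen_of_lt b z hw.2, hratio, hone_add, inv_cpow _ _ harg, ← cpow_neg, real_smul,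
    smul_eq_mul]
  push_cast
  field_simp
  linear_combination -(w : ℂ) ^ (a - 1) * hpow

theorem mellin_laguerreGen (b z : ℂ) {a : ℂ} (ha : 0 < a.re) :
    mellin (laguerreGen b z) a = Gamma a * hypU a b z := by
  have hsupport : ∀ w ∈ Ioi (0 : ℝ) \ Ioo 0 1, (w : ℂ) ^ (a - 1) • laguerreGen b z w = 0 :=
    fun w hw => by
      rw [laguerreGen_of_le b z (not_lt.1 fun h => hw.2 ⟨hw.1, h⟩), smul_zero]
  rw [hypU, mul_inv_cancel_left₀ (Gamma_ne_zero_of_re_pos ha), mellin,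
    setIntegral_eq_of_subset_of_forall_sdiff_eq_zero measurableSet_Ioi Ioo_subset_Ioi_self
      hsupport,
    ← image_div_one_sub, integral_image_eq_integral_deriv_smul_of_monotoneOn measurableSet_Ioo
      (fun w hw => (hasDerivAt_div_one_sub hw.2.ne).hasDerivWithinAt) monotoneOn_div_one_sub]
  exact setIntegral_congr_fun measurableSet_Ioo fun w hw =>
    (hypU_integrand_div_one_sub a b z hw).symm

end MellinLaguerreGen

theorem integral_Gamma_mul_hypU_mul_Gamma_mul_hypU (b b' : ℂ) {p q s σ : ℂ} (hp : 0 < p.re)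
    (hq : 0 < q.re) (hσ : 0 < σ.re) (hσs : σ.re < s.re) :
    ∫ y : ℝ, Gamma (s - (σ + y * I)) * hypU (s - (σ + y * I)) b p *
        (Gamma (σ + y * I) * hypU (σ + y * I) b' q) =
      2 * π * (Gamma s * hypU s (b + b') (p + q)) := by
  have hline : ∀ y : ℝ, (σ.re + y * I : ℂ).re = σ.re := fun y => by simp
  have hdiff : 0 < (s - σ.re).re := by simpa using hσs
  rw [integral_add_mul_I_eq_re
    (fun u => Gamma (s - u) * hypU (s - u) b p * (Gamma u * hypU u b' q))]
  calc _ = ∫ y : ℝ, mellin (laguerreGen b p) (s - (σ.re + y * I)) •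
          mellin (laguerreGen b' q) (σ.re + y * I) := by
        refine integral_congr_ae (.of_forall fun y => ?_)
        simp only [smul_eq_mul]
        rw [mellin_laguerreGen b p (by rwa [sub_re, hline, sub_pos]),
          mellin_laguerreGen b' q (by rwa [hline])]
    _ = (2 * π : ℝ) • mellin (laguerreGen (b + b') (p + q)) s := by
        rw [integral_mellin_smul_mellin (mellinConvergent_laguerreGen b hp hdiff)
          (mellinConvergent_laguerreGen b' hq hσ)
          (verticalIntegrable_mellin_laguerreGen b' hq hσ)
          (continuous_laguerreGen b' hq).continuousOn]
        simp only [smul_eq_mul, laguerreGen_mul_laguerreGen]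
    _ = _ := by
        rw [mellin_laguerreGen _ _ (hσ.trans hσs), real_smul]
        push_cast
        rfl

lemma parD_mul_parD (μ ν x y : ℂ) :
    parD μ x * parD ν y = 2 ^ ((μ + ν) / 2) * exp (-(x ^ 2 + y ^ 2) / 4) *
      (hypU (-μ / 2) (1 / 2) (x ^ 2 / 2) * hypU (-ν / 2) (1 / 2) (y ^ 2 / 2)) := by
  rw [parD, parD, add_div, cpow_add _ _ two_ne_zero, neg_add, add_div, exp_add]
  ring

theorem integral_Gamma_mul_Gamma_mul_parD_mul_parD {x y σ : ℂ} (hx : 0 < (x ^ 2).re)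
    (hy : 0 < (y ^ 2).re) (hσ : |σ.re| < 1 / 4) :
    ∫ τ : ℝ, Gamma (1 / 4 - (σ + I * τ)) * Gamma (1 / 4 + (σ + I * τ)) *
        parD (2 * (σ + I * τ) - 1 / 2) x * parD (-2 * (σ + I * τ) - 1 / 2) y =
      2 ^ (-(1 / 2) : ℂ) * exp (-(x ^ 2 + y ^ 2) / 4) *
        (2 * π * (√π * hypU (1 / 2) 1 ((x ^ 2 + y ^ 2) / 2))) := by
  obtain ⟨hσl, hσr⟩ := abs_lt.1 hσ
  have hU := integral_Gamma_mul_hypU_mul_Gamma_mul_hypU (1 / 2) (1 / 2) (p := x ^ 2 / 2)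
    (q := y ^ 2 / 2) (s := 1 / 2) (σ := 1 / 4 + σ) (by simpa using hx) (by simpa using hy)
    (by simp; linarith) (by simp; linarith)
  have hGamma : Gamma (1 / 2) = √π := by
    rw [Gamma_one_half_eq, Real.sqrt_eq_rpow, ofReal_cpow Real.pi_pos.le]
    norm_num
  rw [hGamma, add_halves, ← add_div] at hU
  rw [← hU, ← integral_const_mul]
  refine integral_congr_ae (.of_forall fun τ => ?_)
  simp only [mul_assoc, parD_mul_parD]
  ring_nf

/-- Addition theorem for the order-zero Hankel function of the first kind. -/
theorem hankelH01_addition (ξ η σ : ℂ) (hξ : 0 < (ξ ^ 2).im) (hη : 0 < (η ^ 2).im)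
    (hσ : |σ.re| < 1 / 4) :
    hankelH01 ((ξ ^ 2 + η ^ 2) / 2) =
      -((2 : ℂ) ^ ((1 : ℂ) / 2) / (Real.pi : ℂ) ^ 2) *
        (Complex.I * ∫ τ : ℝ,
          Complex.Gamma (1 / 4 - (σ + Complex.I * τ)) *
          Complex.Gamma (1 / 4 + (σ + Complex.I * τ)) *
          parD (2 * (σ + Complex.I * τ) - 1 / 2) ((1 - Complex.I) * ξ) *
          parD (-2 * (σ + Complex.I * τ) - 1 / 2) ((1 - Complex.I) * η)) := by
  have hsq : ∀ x : ℂ, ((1 - I) * x) ^ 2 = -2 * I * x ^ 2 := fun x => by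
    linear_combination x ^ 2 * I_sq
  have hre : ∀ x : ℂ, 0 < (x ^ 2).im → 0 < (((1 - I) * x) ^ 2).re := fun x hx => by
    rw [hsq]; simpa using hx
  have htwo : (2 : ℂ) ^ (1 / 2 : ℂ) * 2 ^ (-(1 / 2) : ℂ) = 1 := by
    rw [← cpow_add _ _ two_ne_zero]; norm_num
  have hroot : (√π : ℂ) ^ 2 = π := by
    rw [← ofReal_pow, Real.sq_sqrt Real.pi_pos.le]
  have hroot0 : (√π : ℂ) ≠ 0 := ofReal_ne_zero.2 (Real.sqrt_pos.2 Real.pi_pos).ne'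
  rw [integral_Gamma_mul_Gamma_mul_parD_mul_parD (hre ξ hξ) (hre η hη) hσ, hsq, hsq, hankelH01,
    ← hroot,
    show I * ((ξ ^ 2 + η ^ 2) / 2) = -(-2 * I * ξ ^ 2 + -2 * I * η ^ 2) / 4 by ring,
    show -2 * I * ((ξ ^ 2 + η ^ 2) / 2) = (-2 * I * ξ ^ 2 + -2 * I * η ^ 2) / 2 by ring]
  generalize hypU (1 / 2) 1 _ = H
  field_simp
  linear_combination H * htwo
end
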